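/- Consider the graded C*-dynamical system (CAR(H), α^{H₀}, γ_G) with dynamics and grading given by Bogoliubov automorphisms from a strongly continuous unitary group e^{itH₀} and a commuting selfadjoint unitary G, where dim H_odd = ∞ and ker H₀ = {0}; let ω_β be the unique (α^{H₀}, β)-KMS state on CAR(H), with β ≠ 0. Then the following are equivalent: (a) there exists a nonzero hermitian γ_G-twisted (α^{H₀}, β)-KMS functional dominated by ω_β; (b) c_{βH₀} := Π_{λ ∈ σ(H_odd)} (1 − e^{−|βλ|})/(1 + e^{−|βλ|}) > 0 (product over the spectrum of H_odd = H₀|_{H_odd} counted with multiplicity); (c) Tr_{H_odd}(e^{−|β H_odd|}) < ∞. In this case the quasifree functional μ_{T_β^G} with T_β^G = i(1 − Ge^{βH₀})(1 + Ge^{βH₀})^{−1} is bounded, and the set of hermitian γ_G-twisted (α^{H₀}, β)-KMS functionals dominated by ω_β equals {c · μ_{T_β^G} : c ∈ [−c_{βH₀}, c_{βH₀}]}. -/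

import Mathlib

open scoped InnerProductSpace ComplexOrder

noncomputable section

/-- A strongly continuous one-parameter group of *-automorphisms of a unital C*-algebra. -/
structure Dynamics (A : Type*) [CStarAlgebra A] where
  α : ℝ → A ≃⋆ₐ[ℂ] A
  α_zero : ∀ a, α 0 a = a
  α_add : ∀ s t a, α (s + t) a = α s (α t a)
  α_cont : ∀ a, Continuous fun t => α t a

variable {A : Type*} [CStarAlgebra A]

/-- `f` is the entire analytic extension of `t ↦ α_t a`; an element admitting such an
extension is an entire analytic element for the dynamics. -/
def Dynamics.IsAnalyticExt (d : Dynamics A) (a : A) (f : ℂ → A) : Prop :=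
  Differentiable ℂ f ∧ ∀ t : ℝ, f (t : ℂ) = d.α t a

/-- A state: positive normalized linear functional. -/
def IsState (ω : A → ℂ) : Prop :=
  IsLinearMap ℂ ω ∧ (∀ a : A, 0 ≤ ω (star a * a)) ∧ ω 1 = 1

/-- The `(α, β)`-KMS condition: `ω (a * α_{iβ}(b)) = ω (b * a)` for entire analytic `a, b`. -/
def Dynamics.IsKMS (d : Dynamics A) (β : ℝ) (ω : A → ℂ) : Prop :=
  IsState ω ∧ ∀ a b : A, ∀ fa fb : ℂ → A, d.IsAnalyticExt a fa → d.IsAnalyticExt b fb →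
    ω (a * fb (Complex.I * β)) = ω (b * a)

/-- A graded C*-dynamical system: dynamics plus a commuting involutive grading. -/
structure GradedDyn (A : Type*) [CStarAlgebra A] extends Dynamics A where
  γ : A ≃⋆ₐ[ℂ] A
  γ_invol : ∀ a, γ (γ a) = a
  γ_comm : ∀ t a, γ (α t a) = α t (γ a)

/-- The `γ`-twisted `(α, β)`-KMS condition: `ρ (a * α_{iβ}(b)) = ρ (b * γ a)`. -/
def Dynamics.IsTwistedKMS (d : Dynamics A) (γ : A ≃⋆ₐ[ℂ] A) (β : ℝ) (ρ : A → ℂ) : Prop :=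
  IsLinearMap ℂ ρ ∧ ∀ a b : A, ∀ fa fb : ℂ → A, d.IsAnalyticExt a fa → d.IsAnalyticExt b fb →
    ρ (a * fb (Complex.I * β)) = ρ (b * γ a)

/-- Hermitian functional: `ρ(a*) = conj (ρ a)`. -/
def IsHermitian (ρ : A → ℂ) : Prop := ∀ a, ρ (star a) = starRingEnd ℂ (ρ a)

/-- `ρ` is dominated by `ω`: `|ρ(a* b)|² ≤ ω(a* a) ω(b* b)`. -/
def Dominated (ω ρ : A → ℂ) : Prop :=
  ∀ a b : A, (‖ρ (star a * b)‖ : ℂ) ^ 2 ≤ ω (star a * a) * ω (star b * b)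

/-- The set `F_β(A, α, γ, ω)`: hermitian `γ`-twisted `(α,β)`-KMS functionals dominated by `ω`. -/
def TwistedKMSDom (d : Dynamics A) (γ : A ≃⋆ₐ[ℂ] A) (β : ℝ) (ω ρ : A → ℂ) : Prop :=
  d.IsTwistedKMS γ β ρ ∧ IsHermitian ρ ∧ Dominated ω ρ

/-- Product of the `ℤ₂`-crossed product `A ⋊_γ ℤ₂` realized on `A ⊕ A`. -/
def cpMul (γ : A ≃⋆ₐ[ℂ] A) (p q : A × A) : A × A :=
  (p.1 * q.1 + p.2 * γ q.2, p.1 * q.2 + p.2 * γ q.1)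

/-- Involution of the crossed product. -/
def cpStar (γ : A ≃⋆ₐ[ℂ] A) (p : A × A) : A × A := (star p.1, γ (star p.2))

/-- Unit of the crossed product. -/
def cpOne : A × A := (1, 0)

/-- A state on the crossed product. -/
def cpIsState (γ : A ≃⋆ₐ[ℂ] A) (W : A × A → ℂ) : Prop :=
  IsLinearMap ℂ W ∧ (∀ p : A × A, 0 ≤ W (cpMul γ (cpStar γ p) p)) ∧ W (cpOne : A × A) = 1

/-- Entire analytic extension for the componentwise extended dynamics `𝛂` on `A ⊕ A`. -/
def cpIsAnalyticExt (d : Dynamics A) (p : A × A) (f : ℂ → A × A) : Prop :=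
  Differentiable ℂ f ∧ ∀ t : ℝ, f (t : ℂ) = (d.α t p.1, d.α t p.2)

/-- `(𝛂, β)`-KMS states of the crossed product `A ⋊_γ ℤ₂`. -/
def cpIsKMS (d : Dynamics A) (γ : A ≃⋆ₐ[ℂ] A) (β : ℝ) (W : A × A → ℂ) : Prop :=
  cpIsState γ W ∧ ∀ p q : A × A, ∀ fp fq : ℂ → A × A,
    cpIsAnalyticExt d p fp → cpIsAnalyticExt d q fq →
    W (cpMul γ p (fq (Complex.I * β))) = W (cpMul γ q p)


/-- A realization of the CAR algebra `CAR(H)` over a complex Hilbert space `H`: a unital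
C*-algebra `A` generated by elements `c φ = a(φ)` (antilinear in `φ`) satisfying the
canonical anticommutation relations. -/
structure CARrep (H A : Type*) [NormedAddCommGroup H] [InnerProductSpace ℂ H]
    [CStarAlgebra A] where
  c : H → A
  c_add : ∀ φ ψ, c (φ + ψ) = c φ + c ψ
  c_smul : ∀ (z : ℂ) (φ), c (z • φ) = starRingEnd ℂ z • c φ
  car₁ : ∀ φ ψ, star (c φ) * c ψ + c ψ * star (c φ) = ⟪ψ, φ⟫_ℂ • (1 : A)
  car₂ : ∀ φ ψ, c φ * c ψ + c ψ * c φ = 0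
  gen : Dense
    ((Algebra.adjoin ℂ (Set.range c ∪ Set.range fun φ => star (c φ)) : Subalgebra ℂ A) : Set A)

namespace CARrep

variable {H A : Type*} [NormedAddCommGroup H] [InnerProductSpace ℂ H] [CStarAlgebra A]

/-- The field operators `Φ(ξ) = a*(ξ) + a(ξ)`. -/
def Φ (r : CARrep H A) (ξ : H) : A := star (r.c ξ) + r.c ξ

/-- Product of field operators `Φ(ξ₁) ⋯ Φ(ξ_n)` along a list. -/
def fieldProd (r : CARrep H A) (L : List H) : A := (L.map r.Φ).prod

end CARrep

/-- The two-point function `Re⟪ξ, η⟫ + i Re⟪ξ, T η⟫` determined by an operator `T`. -/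
def twoPt {H : Type*} [NormedAddCommGroup H] [InnerProductSpace ℂ H]
    (T : H →L[ℂ] H) (ξ η : H) : ℂ :=
  ((⟪ξ, η⟫_ℂ).re : ℂ) + Complex.I * ((⟪ξ, T η⟫_ℂ).re : ℂ)

/-- The quasifree `n`-point values determined by the two-point function of `T`: the sum
over pairings with parity signs, computed via the equivalent Wick recursion
`μ(Φ_{ξ} Φ_{L₀} ⋯ ) = Σ_j (−1)^j μ(Φ_ξ Φ_{L_j}) μ(Φ_{L_0} ⋯ ĵ ⋯)`. -/
def qfVal {H : Type*} [NormedAddCommGroup H] [InnerProductSpace ℂ H]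
    (T : H →L[ℂ] H) : List H → ℂ
  | [] => 1
  | ξ :: L => ∑ j ∈ Finset.range L.length,
      (-1 : ℂ) ^ j * twoPt T ξ (L.getD j 0) * qfVal T (L.eraseIdx j)
  termination_by L => L.length
  decreasing_by
    simp only [List.length_cons]
    exact Nat.lt_succ_of_le (List.length_eraseIdx_le ..)

/-- `μ` is the quasifree functional with covariance operator `T` (on the *-algebra
generated by the fields): its values on products of fields are the quasifree values of
`T`; in particular `μ(1) = 1` and all odd-point functions vanish. -/
def CARrep.IsQuasifreeWith {H A : Type*} [NormedAddCommGroup H]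
    [InnerProductSpace ℂ H] [CStarAlgebra A] (r : CARrep H A) (T : H →L[ℂ] H)
    (μ : A → ℂ) : Prop :=
  ∀ L : List H, μ (r.fieldProd L) = qfVal T L


/-- `(e, lam)` is an orthonormal basis of the odd subspace `H_odd = ker (G + 1)`
consisting of eigenvectors of the unitary group `U(t) = e^{itH₀}` with eigenvalues
`lam k` of the generator (so that `σ(H_odd) = {lam k}` counted with multiplicity). -/
def EigenBasisOdd {Hs : Type*} [NormedAddCommGroup Hs] [InnerProductSpace ℂ Hs]
    (G : Hs →L[ℂ] Hs) (U : ℝ → Hs ≃ₗᵢ[ℂ] Hs) (e : ℕ → Hs) (lam : ℕ → ℝ) : Prop :=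
  Orthonormal ℂ e ∧
  (∀ k, G (e k) = -e k) ∧
  (∀ φ : Hs, G φ = -φ →
    φ ∈ closure ((Submodule.span ℂ (Set.range e) : Submodule ℂ Hs) : Set Hs)) ∧
  (∀ (t : ℝ) (k), U t (e k) = Complex.exp (Complex.I * t * lam k) • e k)

/-!
The twisted KMS condition, applied to a field `Φ(φ)` with `φ` entire for `U`, lets `Φ(φ)` be moved
around a product of fields. This yields a Wick recursion, so a twisted KMS functional `ρ` is
`ρ 1` times the quasifree functional of a covariance operator `T = T_β^G`, and only the size of
`ρ 1` is at stake. For a unit vector `e k` with eigenvalue `lam k` in an eigenbasis of the odd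
subspace, the selfadjoint unitary `1 - 2 a*(e k) a(e k)` implements the reflection in `e k`. The
product `V n` of the first `n` of them has `ω (V n) = ∏ tanh (β lam k / 2)`, while `ρ (V n)` is
`ρ 1` times the product of the inverses, so domination of `ρ` by `ω` forces
`|ρ 1| ≤ ∏ |tanh (β lam k / 2)|`. Conversely `V n` asymptotically implements the grading, and
any limit point of `a ↦ ω (a * V n)` is a twisted KMS functional that attains this bound.

To find the eigenbasis from a nonzero `ρ`, let `S` and `T` be the covariance operators of `ω` and
`ρ`. Domination bounds the square sums of the diagonal of the symmetric operator `i (T - S)` over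
all orthonormal families, hence this operator is compact. It vanishes on the even subspace and is
injective on the odd one, where its eigenvectors are eigenvectors of `U`.
-/

/-! ### States and dominated functionals -/

namespace IsState

attribute [local instance] CStarAlgebra.spectralOrder CStarAlgebra.spectralOrderedRing

variable {ω ρ : A → ℂ}

/-- A state as a positive linear map for the spectral order of `A`. -/
def toPositiveLinearMap (h : IsState ω) : A →ₚ[ℂ] ℂ :=
  .mk₀ (h.1.mk' ω) fun a ha => by
    obtain ⟨b, rfl⟩ := CStarAlgebra.nonneg_iff_eq_star_mul_self.1 ha
    exact h.2.1 b

theorem map_star (h : IsState ω) (a : A) : ω (star a) = star (ω a) :=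
  StarHomClass.map_star h.toPositiveLinearMap a

theorem ofReal_re_map_star_mul_self (h : IsState ω) (a : A) :
    ((ω (star a * a)).re : ℂ) = ω (star a * a) :=
  (Complex.eq_re_of_ofReal_le (r := 0) (by simpa using h.2.1 a)).symm

theorem norm_map_star_mul_sq_le (h : IsState ω) (a b : A) :
    ‖ω (star a * b)‖ ^ 2 ≤ (ω (star a * a)).re * (ω (star b * b)).re := by
  let f := h.toPositiveLinearMap
  have key := inner_mul_inner_self_le (𝕜 := ℂ) (f.toPreGNS a) (f.toPreGNS b)
  rwa [norm_inner_symm (f.toPreGNS b), ← sq] at key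

theorem re_map_star_mul_self_le (h : IsState ω) (a : A) :
    (ω (star a * a)).re ≤ ‖a‖ ^ 2 := by
  have hle := h.toPositiveLinearMap.norm_apply_le_of_nonneg (star a * a) (star_mul_self_nonneg a)
  rw [show h.toPositiveLinearMap 1 = 1 from h.2.2, norm_one, one_mul,
    CStarRing.norm_star_mul_self, ← sq] at hle
  exact (Complex.re_le_norm _).trans hle

theorem norm_map_sq_le (h : IsState ω) (a : A) : ‖ω a‖ ^ 2 ≤ (ω (star a * a)).re := by
  simpa [h.2.2] using h.norm_map_star_mul_sq_le 1 a

theorem norm_map_le (h : IsState ω) (a : A) : ‖ω a‖ ≤ ‖a‖ :=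
  le_of_sq_le_sq ((h.norm_map_sq_le a).trans (h.re_map_star_mul_self_le a)) (norm_nonneg a)

theorem dominated_iff (h : IsState ω) :
    Dominated ω ρ ↔
      ∀ a b : A, ‖ρ (star a * b)‖ ^ 2 ≤ (ω (star a * a)).re * (ω (star b * b)).re := by
  refine forall₂_congr fun a b => ?_
  rw [← h.ofReal_re_map_star_mul_self a, ← h.ofReal_re_map_star_mul_self b]
  norm_cast

end IsState

theorem Dominated.norm_map_sq_le {ω ρ : A → ℂ} (hρ : Dominated ω ρ) (h : IsState ω) (a : A) :
    ‖ρ a‖ ^ 2 ≤ (ω (star a * a)).re := by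
  simpa [h.2.2] using h.dominated_iff.1 hρ 1 a

theorem Dominated.norm_map_le {ω ρ : A → ℂ} (hρ : Dominated ω ρ) (h : IsState ω) (a : A) :
    ‖ρ a‖ ≤ ‖a‖ :=
  le_of_sq_le_sq ((hρ.norm_map_sq_le h a).trans (h.re_map_star_mul_self_le a)) (norm_nonneg a)

theorem exists_continuousLinearMap_of_norm_le {ρ : A → ℂ} (hρ : IsLinearMap ℂ ρ)
    (hle : ∀ a, ‖ρ a‖ ≤ ‖a‖) : ∃ ρ' : A →L[ℂ] ℂ, ⇑ρ' = ρ :=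
  ⟨(hρ.mk' ρ).mkContinuous 1 fun a => by simpa using hle a, rfl⟩

/-! ### Canonical anticommutation relations -/

namespace CARrep

variable {H : Type*} [NormedAddCommGroup H] [InnerProductSpace ℂ H] (r : CARrep H A)

theorem c_mul_self (φ : H) : r.c φ * r.c φ = 0 :=
  have hadd : (2 : ℂ) • (r.c φ * r.c φ) = 0 := by rw [two_smul, r.car₂]
  (smul_eq_zero_iff_right two_ne_zero).1 hadd

section

attribute [local instance] CStarAlgebra.spectralOrder CStarAlgebra.spectralOrderedRing

theorem norm_c_le (φ : H) : ‖r.c φ‖ ≤ ‖φ‖ := by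
  have hle : star (r.c φ) * r.c φ ≤ algebraMap ℝ A (‖φ‖ ^ 2) := by
    have hsum : algebraMap ℝ A (‖φ‖ ^ 2) = star (r.c φ) * r.c φ + r.c φ * star (r.c φ) := by
      rw [r.car₁, inner_self_eq_norm_sq_to_K, Algebra.algebraMap_eq_smul_one, ← Complex.coe_smul]
      norm_cast
    rw [hsum]
    exact le_add_of_nonneg_right (mul_star_self_nonneg _)
  have hnorm := (CStarAlgebra.norm_le_iff_le_algebraMap _ (sq_nonneg _)
    (star_mul_self_nonneg _)).2 hle
  rw [CStarRing.norm_star_mul_self, ← sq] at hnorm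
  exact le_of_sq_le_sq hnorm (norm_nonneg φ)

end

/-- The creation map `φ ↦ a*(φ)`, linear and bounded. -/
def creation : H →L[ℂ] A :=
  LinearMap.mkContinuous
    { toFun := fun φ => star (r.c φ)
      map_add' := fun φ ψ => by rw [r.c_add, star_add]
      map_smul' := fun z φ => by simp [r.c_smul] } 1
    fun φ => by simpa using r.norm_c_le φ

@[simp]
theorem creation_apply (φ : H) : r.creation φ = star (r.c φ) := rfl

theorem continuous_c : Continuous r.c := by
  simpa using r.creation.continuous.star

theorem continuous_Φ : Continuous r.Φ := r.creation.continuous.add r.continuous_c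

@[simp]
theorem star_Φ (φ : H) : star (r.Φ φ) = r.Φ φ := by
  simp [Φ, add_comm]

theorem Φ_add (φ ψ : H) : r.Φ (φ + ψ) = r.Φ φ + r.Φ ψ := by
  simp only [Φ, r.c_add, star_add, add_add_add_comm]

theorem Φ_neg (φ : H) : r.Φ (-φ) = -r.Φ φ :=
  map_neg (AddMonoidHom.mk' r.Φ r.Φ_add) φ

theorem Φ_I_smul (φ : H) : r.Φ (Complex.I • φ) = Complex.I • (star (r.c φ) - r.c φ) := by
  simp [Φ, r.c_smul, sub_eq_add_neg]

theorem c_sub (φ ψ : H) : r.c (φ - ψ) = r.c φ - r.c ψ :=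
  map_sub (AddMonoidHom.mk' r.c r.c_add) φ ψ

theorem c_neg (φ : H) : r.c (-φ) = -r.c φ :=
  map_neg (AddMonoidHom.mk' r.c r.c_add) φ

theorem c_eq_Φ (φ : H) :
    r.c φ = (1 / 2 : ℂ) • (r.Φ φ + Complex.I • r.Φ (Complex.I • φ)) := by
  rw [Φ_I_smul, smul_smul, Complex.I_mul_I, Φ]
  module

theorem star_c_eq_Φ (φ : H) :
    star (r.c φ) = (1 / 2 : ℂ) • (r.Φ φ - Complex.I • r.Φ (Complex.I • φ)) := by
  rw [Φ_I_smul, smul_smul, Complex.I_mul_I, Φ]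
  module

theorem c_mul_Φ_add (χ φ : H) : r.c χ * r.Φ φ + r.Φ φ * r.c χ = ⟪χ, φ⟫_ℂ • (1 : A) := by
  calc r.c χ * r.Φ φ + r.Φ φ * r.c χ
      = (star (r.c φ) * r.c χ + r.c χ * star (r.c φ)) + (r.c χ * r.c φ + r.c φ * r.c χ) := by
        rw [Φ, mul_add, add_mul]; abel
    _ = ⟪χ, φ⟫_ℂ • (1 : A) := by rw [r.car₁, r.car₂, add_zero]

theorem star_c_mul_Φ_add (χ φ : H) :
    star (r.c χ) * r.Φ φ + r.Φ φ * star (r.c χ) = ⟪φ, χ⟫_ℂ • (1 : A) := by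
  rw [← inner_conj_symm, ← RCLike.star_def, ← star_one A, ← star_smul, ← r.c_mul_Φ_add, star_add,
    star_mul, star_mul, star_Φ, add_comm]

theorem induction_on {P : A → Prop} (hclosed : IsClosed {a | P a}) (hc : ∀ φ, P (r.c φ))
    (hstar : ∀ φ, P (star (r.c φ))) (halg : ∀ z : ℂ, P (algebraMap ℂ A z))
    (hadd : ∀ a b, P a → P b → P (a + b)) (hmul : ∀ a b, P a → P b → P (a * b)) (a : A) :
    P a := by
  refine closure_minimal (fun x hx => ?_) hclosed (r.gen a)
  induction hx using Algebra.adjoin_induction with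
  | mem x hx =>
    rcases hx with ⟨φ, rfl⟩ | ⟨φ, rfl⟩
    exacts [hc φ, hstar φ]
  | algebraMap z => exact halg z
  | add x y _ _ hx hy => exact hadd x y hx hy
  | mul x y _ _ hx hy => exact hmul x y hx hy

@[simp]
theorem fieldProd_nil : r.fieldProd [] = 1 := rfl

@[simp]
theorem fieldProd_cons (ξ : H) (L : List H) : r.fieldProd (ξ :: L) = r.Φ ξ * r.fieldProd L := by
  simp [fieldProd]

theorem fieldProd_append (L M : List H) :
    r.fieldProd (L ++ M) = r.fieldProd L * r.fieldProd M := by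
  simp [fieldProd]

theorem continuous_fieldProd_cons (L : List H) : Continuous fun ξ => r.fieldProd (ξ :: L) := by
  simpa using r.continuous_Φ.mul_const (r.fieldProd L)

theorem dense_span_fieldProd :
    Dense (Submodule.span ℂ (Set.range r.fieldProd) : Set A) := by
  set S : Submodule ℂ A := Submodule.span ℂ (Set.range r.fieldProd) with hS
  have hΦ (φ : H) : r.Φ φ ∈ S := Submodule.subset_span ⟨[φ], by simp⟩
  have hone : (1 : A) ∈ S := Submodule.subset_span ⟨[], r.fieldProd_nil⟩
  have hmul : S * S ≤ S := by
    rw [hS, Submodule.span_mul_span]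
    refine Submodule.span_mono ?_
    rintro _ ⟨_, ⟨L, rfl⟩, _, ⟨M, rfl⟩, rfl⟩
    exact ⟨L ++ M, r.fieldProd_append L M⟩
  refine r.gen.mono fun x hx => ?_
  induction hx using Algebra.adjoin_induction with
  | mem x hx =>
    rcases hx with ⟨φ, rfl⟩ | ⟨φ, rfl⟩
    · rw [c_eq_Φ]
      exact S.smul_mem _ (S.add_mem (hΦ _) (S.smul_mem _ (hΦ _)))
    · beta_reduce
      rw [star_c_eq_Φ]
      exact S.smul_mem _ (S.sub_mem (hΦ _) (S.smul_mem _ (hΦ _)))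
  | algebraMap z => exact Algebra.algebraMap_eq_smul_one (A := A) z ▸ S.smul_mem z hone
  | add x y _ _ hx hy => exact S.add_mem hx hy
  | mul x y _ _ hx hy => exact hmul (Submodule.mul_mem_mul hx hy)

theorem functional_ext {ρ σ : A →L[ℂ] ℂ}
    (h : ∀ L, ρ (r.fieldProd L) = σ (r.fieldProd L)) : ρ = σ :=
  ContinuousLinearMap.ext_on r.dense_span_fieldProd (by rintro _ ⟨L, rfl⟩; exact h L)

theorem mul_fieldProd {b : A} {κ : H → ℂ}
    (hb : ∀ ξ, b * r.Φ ξ + r.Φ ξ * b = κ ξ • (1 : A)) (L : List H) :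
    b * r.fieldProd L = ∑ j ∈ Finset.range L.length,
      ((-1 : ℂ) ^ j * κ (L.getD j 0)) • r.fieldProd (L.eraseIdx j)
      + (-1 : ℂ) ^ L.length • (r.fieldProd L * b) := by
  induction L with
  | nil => simp
  | cons ξ L ih =>
    rw [fieldProd_cons, ← mul_assoc, eq_sub_of_add_eq (hb ξ), sub_mul, mul_assoc, ih,
      List.length_cons, Finset.sum_range_succ']
    simp only [List.getD_cons_succ, List.eraseIdx_cons_succ, fieldProd_cons, List.getD_cons_zero,
      List.eraseIdx_cons_zero, pow_succ, pow_zero, mul_add, Finset.mul_sum, mul_smul_comm,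
      smul_mul_assoc, one_mul, mul_neg_one, neg_mul, neg_smul, Finset.sum_neg_distrib, mul_assoc]
    abel

end CARrep

open MeasureTheory Filter Topology

/-! ### Entire vectors of a unitary group -/

section EntireFunctions

variable {E : Type*} [NormedAddCommGroup E] [NormedSpace ℂ E]

/-- Cauchy's estimate supplies the domination of the derivative. -/
theorem differentiable_integral_of_locally_dominated {α : Type*} [MeasurableSpace α]
    {μ : Measure α} {F : ℂ → α → E} (hF : ∀ s, Differentiable ℂ fun z => F z s)
    (hmeas : ∀ z, AEStronglyMeasurable (F z) μ)
    (hdom : ∀ R : ℝ, ∃ g : α → ℝ, Integrable g μ ∧ ∀ z, ‖z‖ ≤ R → ∀ s, ‖F z s‖ ≤ g s) :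
    Differentiable ℂ fun z => ∫ s, F z s ∂μ := by
  intro z₀
  obtain ⟨g, hg, hle⟩ := hdom (‖z₀‖ + 2)
  have hderiv (z : ℂ) (hz : z ∈ Metric.ball z₀ 1) (s : α) :
      ‖deriv (fun z => F z s) z‖ ≤ g s := by
    simpa using Complex.norm_deriv_le_of_forall_mem_sphere_norm_le one_pos (hF s).diffContOnCl
      fun w hw => hle w (by
        have h₁ := norm_sub_norm_le w z₀
        have h₂ := norm_sub_le_norm_sub_add_norm_sub w z z₀
        rw [mem_sphere_iff_norm] at hw
        rw [mem_ball_iff_norm] at hz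
        linarith) s
  have hmeas' : AEStronglyMeasurable (fun s => deriv (fun z => F z s) z₀) μ := by
    have hseq : Tendsto (fun n : ℕ => ((1 / ((n : ℝ) + 1) : ℝ) : ℂ)) atTop (𝓝[≠] 0) :=
      tendsto_nhdsWithin_iff.2 ⟨(Complex.continuous_ofReal.tendsto' 0 0 rfl).comp
        tendsto_one_div_add_atTop_nhds_zero_nat, Eventually.of_forall fun n => by
          simpa using Nat.cast_add_one_ne_zero n⟩
    exact aestronglyMeasurable_of_tendsto_ae atTop
      (fun n => ((hmeas _).sub (hmeas z₀)).const_smul _)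
      (Eventually.of_forall fun s => (hF s z₀).hasDerivAt.tendsto_slope_zero.comp hseq)
  have hint : Integrable (F z₀) μ :=
    hg.mono' (hmeas z₀) (Eventually.of_forall (hle z₀ (by linarith)))
  exact (hasDerivAt_integral_of_dominated_loc_of_deriv_le (Metric.ball_mem_nhds z₀ one_pos)
    (Eventually.of_forall hmeas) hint hmeas'
    (Eventually.of_forall fun s z hz => hderiv z hz s) hg
    (Eventually.of_forall fun s z _ => (hF s z).hasDerivAt)).2.differentiableAt

theorem apply_eq_apply_of_periodic_of_bounded_strip {F : ℂ → E} (hF : Differentiable ℂ F)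
    {b C : ℝ} (hb : b ≠ 0) (hper : Function.Periodic F (Complex.I * b))
    (hC : ∀ z : ℂ, |z.im| ≤ |b| → ‖F z‖ ≤ C) (z w : ℂ) : F z = F w := by
  refine hF.apply_eq_apply_of_bounded (isBounded_iff_forall_norm_le.2 ⟨C, ?_⟩) z w
  rintro _ ⟨z, rfl⟩
  rw [← hper.sub_zsmul_eq ⌊z.im / b⌋]
  refine hC _ ?_
  have him : (z - ⌊z.im / b⌋ • (Complex.I * b)).im = Int.fract (z.im / b) * b := by
    have hre : (z - ⌊z.im / b⌋ • (Complex.I * b)).im = z.im - ⌊z.im / b⌋ * b := by simp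
    rw [hre, ← Int.self_sub_floor, sub_mul, div_mul_cancel₀ _ hb]
  rw [him, abs_mul, Int.abs_fract]
  exact mul_le_of_le_one_left (abs_nonneg b) (Int.fract_lt_one _).le

variable [CompleteSpace E]

theorem eq_of_forall_ofReal_eq {f g : ℂ → E} (hf : Differentiable ℂ f) (hg : Differentiable ℂ g)
    (h : ∀ t : ℝ, f t = g t) : f = g := by
  have hreal : Tendsto ((↑) : ℝ → ℂ) (𝓝[≠] 0) (𝓝[≠] 0) :=
    tendsto_nhdsWithin_iff.2 ⟨(Complex.continuous_ofReal.tendsto' 0 0 rfl).mono_left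
      nhdsWithin_le_nhds, eventually_nhdsWithin_of_forall fun t ht => by simpa using ht⟩
  exact AnalyticOnNhd.eq_of_frequently_eq (z₀ := 0) (fun z _ => hf.analyticAt z)
    (fun z _ => hg.analyticAt z) (hreal.frequently (Frequently.of_forall h))

end EntireFunctions

/-- A strongly continuous one-parameter group of linear isometries; the generator `H₀` of
`U t = e^{itH₀}` is never formed. -/
structure IsIsometryGroup {E : Type*} [NormedAddCommGroup E] [NormedSpace ℂ E]
    (U : ℝ → E ≃ₗᵢ[ℂ] E) : Prop where
  zero_apply : ∀ ξ, U 0 ξ = ξ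
  add_apply : ∀ s t ξ, U (s + t) ξ = U s (U t ξ)
  continuous_apply : ∀ ξ, Continuous fun t => U t ξ

/-- `f` is the entire extension of the orbit `t ↦ U t φ`, that is `f z = e^{izH₀} φ`. -/
def IsEntireOrbit {E : Type*} [NormedAddCommGroup E] [NormedSpace ℂ E]
    (U : ℝ → E ≃ₗᵢ[ℂ] E) (φ : E) (f : ℂ → E) : Prop :=
  Differentiable ℂ f ∧ ∀ t : ℝ, f (t : ℂ) = U t φ

namespace IsEntireOrbit

variable {E : Type*} [NormedAddCommGroup E] [NormedSpace ℂ E] {U : ℝ → E ≃ₗᵢ[ℂ] E}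
  {φ ψ : E} {f g : ℂ → E}

theorem zero : IsEntireOrbit U 0 fun _ => 0 :=
  ⟨differentiable_const _, fun t => by simp⟩

theorem add (hf : IsEntireOrbit U φ f) (hg : IsEntireOrbit U ψ g) :
    IsEntireOrbit U (φ + ψ) fun z => f z + g z :=
  ⟨hf.1.add hg.1, fun t => by simp [hf.2, hg.2]⟩

theorem const_smul (hf : IsEntireOrbit U φ f) (c : ℂ) :
    IsEntireOrbit U (c • φ) fun z => c • f z :=
  ⟨hf.1.const_smul c, fun t => by simp [hf.2]⟩

theorem map (hf : IsEntireOrbit U φ f) (B : E →L[ℂ] E) (hB : ∀ t ξ, U t (B ξ) = B (U t ξ)) :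
    IsEntireOrbit U (B φ) fun z => B (f z) :=
  ⟨B.differentiable.comp hf.1, fun t => by simp only [hf.2, hB]⟩

theorem of_eigenvector {lam : ℝ}
    (h : ∀ t : ℝ, U t φ = Complex.exp (Complex.I * t * lam) • φ) :
    IsEntireOrbit U φ fun z => Complex.exp (Complex.I * z * lam) • φ :=
  ⟨by fun_prop, fun t => (h t).symm⟩

variable [CompleteSpace E]

theorem shift (hU : IsIsometryGroup U) (hf : IsEntireOrbit U φ f) (w : ℂ) :
    IsEntireOrbit U (f w) fun z => f (z + w) := by
  refine ⟨hf.1.comp (differentiable_id.add_const w), fun t => ?_⟩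
  refine congrFun (eq_of_forall_ofReal_eq (f := fun w => f (t + w)) (g := fun w => U t (f w))
    (hf.1.comp (differentiable_id.const_add _))
    ((U t).toContinuousLinearEquiv.differentiable.comp hf.1) fun s => ?_) w
  rw [hf.2, ← hU.add_apply, ← hf.2]
  push_cast
  rfl

theorem norm_eq_norm_im (hU : IsIsometryGroup U) (hf : IsEntireOrbit U φ f) (z : ℂ) :
    ‖f z‖ = ‖f (z.im * Complex.I)‖ := by
  have hshift := (hf.shift hU (z.im * Complex.I)).2 z.re
  simp only [Complex.re_add_im] at hshift
  rw [hshift, LinearIsometryEquiv.norm_map]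

theorem exists_norm_le_of_abs_im_le (hU : IsIsometryGroup U) (hf : IsEntireOrbit U φ f) (b : ℝ) :
    ∃ M, ∀ z : ℂ, |z.im| ≤ b → ‖f z‖ ≤ M := by
  have hcont : Continuous fun s : ℝ => f (s * Complex.I) := hf.1.continuous.comp (by fun_prop)
  obtain ⟨M, hM⟩ := (isCompact_Icc (a := -b) (b := b)).exists_bound_of_continuousOn
    hcont.continuousOn
  exact ⟨M, fun z hz => hf.norm_eq_norm_im hU z ▸ hM z.im (abs_le.1 hz)⟩

/-- Liouville's theorem for the function `z ↦ e^{-izλ} ℓ (f z)`, which is periodic in the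
imaginary direction and bounded in the real direction. -/
theorem map_eq_exp_mul (hU : IsIsometryGroup U) (hf : IsEntireOrbit U φ f) (ℓ : E →L[ℂ] ℂ)
    {lam b : ℝ} (hb : b ≠ 0)
    (hℓ : ∀ z, ℓ (f (z - Complex.I * b)) = Complex.exp (lam * b) * ℓ (f z)) (t : ℝ) :
    ℓ (U t φ) = Complex.exp (Complex.I * t * lam) * ℓ φ := by
  set F : ℂ → ℂ := fun z => Complex.exp (-(Complex.I * z * lam)) * ℓ (f z) with hF
  have hdiff : Differentiable ℂ F := by
    have hℓf : Differentiable ℂ fun z => ℓ (f z) := ℓ.differentiable.comp hf.1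
    exact Differentiable.mul (by fun_prop) hℓf
  have hper : Function.Periodic F (Complex.I * b) := fun z => by
    have hz := hℓ (z + Complex.I * b)
    rw [add_sub_cancel_right] at hz
    simp only [hF]
    rw [hz, ← mul_assoc, ← Complex.exp_add]
    congr 2
    linear_combination (-(b : ℂ) * lam) * Complex.I_sq
  obtain ⟨M, hM⟩ := hf.exists_norm_le_of_abs_im_le hU |b|
  have hbound : ∀ z : ℂ, |z.im| ≤ |b| → ‖F z‖ ≤ Real.exp (|lam| * |b|) * (‖ℓ‖ * M) := by
    intro z hz
    have him : (-(Complex.I * z * lam)).re ≤ |lam| * |b| := by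
      calc (-(Complex.I * z * lam)).re = lam * z.im := by simp [mul_comm]
        _ ≤ |lam| * |z.im| := abs_mul lam z.im ▸ le_abs_self _
        _ ≤ |lam| * |b| := by gcongr
    rw [norm_mul, Complex.norm_exp]
    gcongr
    exact (ℓ.le_opNorm _).trans (by gcongr; exact hM z hz)
  have hconst := apply_eq_apply_of_periodic_of_bounded_strip hdiff hb hper hbound t (0 : ℝ)
  simp only [hF, hf.2, hU.zero_apply, Complex.exp_neg] at hconst
  rw [inv_mul_eq_iff_eq_mul₀ (Complex.exp_ne_zero _)] at hconst
  simpa using hconst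

end IsEntireOrbit

section Mollification

variable {E : Type*} [NormedAddCommGroup E] [NormedSpace ℂ E]

theorem IsIsometryGroup.continuous_rescaled_orbit {U : ℝ → E ≃ₗᵢ[ℂ] E}
    (hU : IsIsometryGroup U) (φ : E) (n : ℝ) :
    Continuous fun s : ℝ => U (s / n) φ :=
  (hU.continuous_apply φ).comp (by fun_prop)

/-- The Gaussian `e^{-(s - z)²}` with complex centre `z`, whose convolution with an orbit
produces entire vectors. -/
def gaussian (z : ℂ) (s : ℝ) : ℂ := Complex.exp (-((s : ℂ) - z) ^ 2)

@[fun_prop]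
theorem continuous_gaussian (z : ℂ) : Continuous (gaussian z) := by
  unfold gaussian
  fun_prop

theorem norm_gaussian_le {z : ℂ} {R : ℝ} (hz : ‖z‖ ≤ R) (s : ℝ) :
    ‖gaussian z s‖ ≤ Real.exp (-(1 / 2) * s ^ 2) * Real.exp (R ^ 2) := by
  have hre : (-((s : ℂ) - z) ^ 2).re = -(s - z.re) ^ 2 + z.im ^ 2 := by
    simp [pow_two]
    ring
  have hsq : z.re ^ 2 + z.im ^ 2 ≤ R ^ 2 := by
    rw [pow_two, pow_two, ← Complex.normSq_apply, Complex.normSq_eq_norm_sq]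
    gcongr
  rw [gaussian, Complex.norm_exp, hre, ← Real.exp_add, Real.exp_le_exp]
  nlinarith [sq_nonneg (s / 2 - z.re)]

theorem integrable_gaussian_bound (C : ℝ) :
    Integrable fun s : ℝ => Real.exp (-(1 / 2) * s ^ 2) * C :=
  (integrable_exp_neg_mul_sq (by norm_num)).mul_const C

theorem integral_gaussian_ne_zero : ∫ s : ℝ, gaussian 0 s ≠ 0 := by
  have hreal : ∫ s : ℝ, gaussian 0 s = ((∫ s : ℝ, Real.exp (-1 * s ^ 2) : ℝ) : ℂ) := by
    rw [← integral_complex_ofReal]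
    simp [gaussian]
  rw [hreal, integral_gaussian]
  exact_mod_cast (by positivity)

variable {h : ℝ → E} {C : ℝ}

theorem norm_gaussian_smul_le (hC : ∀ s, ‖h s‖ ≤ C) {z : ℂ} {R : ℝ} (hz : ‖z‖ ≤ R) (s : ℝ) :
    ‖gaussian z s • h s‖ ≤ Real.exp (-(1 / 2) * s ^ 2) * (Real.exp (R ^ 2) * C) := by
  rw [norm_smul, ← mul_assoc]
  gcongr
  exacts [norm_gaussian_le hz s, hC s]

theorem integrable_gaussian_smul (hc : Continuous h) (hC : ∀ s, ‖h s‖ ≤ C) (z : ℂ) :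
    Integrable fun s => gaussian z s • h s :=
  (integrable_gaussian_bound _).mono' (by fun_prop : Continuous _).aestronglyMeasurable
    (Eventually.of_forall (norm_gaussian_smul_le hC le_rfl))

theorem differentiable_integral_gaussian_smul (hc : Continuous h) (hC : ∀ s, ‖h s‖ ≤ C) :
    Differentiable ℂ fun z => ∫ s, gaussian z s • h s :=
  differentiable_integral_of_locally_dominated
    (fun s => by unfold gaussian; fun_prop)
    (fun z => (by fun_prop : Continuous _).aestronglyMeasurable)
    fun R => ⟨_, integrable_gaussian_bound _, fun _ hz => norm_gaussian_smul_le hC hz⟩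

variable [CompleteSpace E]

namespace IsIsometryGroup

variable {U : ℝ → E ≃ₗᵢ[ℂ] E}

theorem isEntireOrbit_integral_gaussian (hU : IsIsometryGroup U) (φ : E) {n : ℝ} (hn : n ≠ 0) :
    IsEntireOrbit U (∫ s : ℝ, gaussian 0 s • U (s / n) φ)
      fun z => ∫ s : ℝ, gaussian (n * z) s • U (s / n) φ := by
  have hcont := hU.continuous_rescaled_orbit φ n
  have hnorm (s : ℝ) : ‖U (s / n) φ‖ ≤ ‖φ‖ := (LinearIsometryEquiv.norm_map _ _).le
  refine ⟨(differentiable_integral_gaussian_smul hcont hnorm).comp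
    (differentiable_id.const_mul (n : ℂ)), fun t => ?_⟩
  have hcomm : ∫ s : ℝ, U t (gaussian 0 s • U (s / n) φ) =
      U t (∫ s : ℝ, gaussian 0 s • U (s / n) φ) :=
    ((U t).toContinuousLinearEquiv : E →L[ℂ] E).integral_comp_comm
      (integrable_gaussian_smul hcont hnorm 0)
  rw [← hcomm, ← integral_sub_right_eq_self _ (n * t)]
  refine integral_congr_ae (Eventually.of_forall fun s => ?_)
  beta_reduce
  rw [map_smul, ← hU.add_apply, show t + (s - n * t) / n = s / n by field_simp; ring]
  congr 1
  simp only [gaussian]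
  push_cast
  ring_nf

theorem tendsto_integral_gaussian (hU : IsIsometryGroup U) (φ : E) :
    Tendsto (fun n : ℕ => ∫ s : ℝ, gaussian 0 s • U (s / ((n : ℝ) + 1)) φ) atTop
      (𝓝 ((∫ s : ℝ, gaussian 0 s) • φ)) := by
  rw [← integral_smul_const]
  have hnorm (n : ℕ) (s : ℝ) : ‖U (s / ((n : ℝ) + 1)) φ‖ ≤ ‖φ‖ :=
    (LinearIsometryEquiv.norm_map _ _).le
  refine tendsto_integral_of_dominated_convergence _
    (fun n => ((continuous_gaussian 0).smul
      (hU.continuous_rescaled_orbit φ _)).aestronglyMeasurable)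
    (integrable_gaussian_bound _)
    (fun n => Eventually.of_forall (norm_gaussian_smul_le (hnorm n) norm_zero.le))
    (Eventually.of_forall fun s => Tendsto.const_smul ?_ _)
  have hzero : Tendsto (fun n : ℕ => s / ((n : ℝ) + 1)) atTop (𝓝 0) := by
    simpa [div_eq_mul_inv] using (tendsto_one_div_add_atTop_nhds_zero_nat (𝕜 := ℝ)).const_mul s
  simpa [Function.comp_def, hU.zero_apply] using
    ((hU.continuous_apply φ).tendsto 0).comp hzero

theorem dense_entireVectors (hU : IsIsometryGroup U) :
    Dense {φ : E | ∃ f, IsEntireOrbit U φ f} := by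
  intro φ
  have hlim := (hU.tendsto_integral_gaussian φ).const_smul (∫ s : ℝ, gaussian 0 s)⁻¹
  rw [inv_smul_smul₀ integral_gaussian_ne_zero] at hlim
  exact mem_closure_of_tendsto hlim (Eventually.of_forall fun n =>
    ⟨_, (hU.isEntireOrbit_integral_gaussian φ (Nat.cast_add_one_ne_zero n)).const_smul _⟩)

end IsIsometryGroup

end Mollification

section TwistedRange

variable {H : Type*} [NormedAddCommGroup H] [InnerProductSpace ℂ H] {U : ℝ → H ≃ₗᵢ[ℂ] H}

/-- The range of `1 + G e^{βH₀}` on entire vectors. -/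
def twistedRange (U : ℝ → H ≃ₗᵢ[ℂ] H) (G : H →L[ℂ] H) (β : ℝ) : Submodule ℂ H where
  carrier := {x | ∃ ψ f, IsEntireOrbit U ψ f ∧ ψ + G (f (-Complex.I * β)) = x}
  add_mem' := by
    rintro _ _ ⟨ψ, f, hf, rfl⟩ ⟨χ, g, hg, rfl⟩
    exact ⟨_, _, hf.add hg, by rw [map_add, add_add_add_comm]⟩
  zero_mem' := ⟨0, _, .zero, by simp⟩
  smul_mem' := by
    rintro c _ ⟨ψ, f, hf, rfl⟩
    exact ⟨_, _, hf.const_smul c, by rw [map_smul, smul_add]⟩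

/-- A vector orthogonal to the range has matrix elements with imaginary period `2β`, hence
is `U`-invariant. -/
theorem dense_twistedRange [CompleteSpace H] (hU : IsIsometryGroup U)
    (hker : ∀ φ : H, (∀ t : ℝ, U t φ = φ) → φ = 0) {G : H →L[ℂ] H} (hG : ∀ φ, G (G φ) = φ)
    (hUG : ∀ (t : ℝ) (ξ), U t (G ξ) = G (U t ξ)) {β : ℝ} (hβ : β ≠ 0) :
    Dense (twistedRange U G β : Set H) := by
  rw [Submodule.dense_iff_topologicalClosure_eq_top, Submodule.topologicalClosure_eq_top_iff,
    Submodule.eq_bot_iff]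
  intro η hη
  have horth : ∀ ψ f, IsEntireOrbit U ψ f → ⟪η, ψ⟫_ℂ = -⟪η, G (f (-Complex.I * β))⟫_ℂ :=
    fun ψ f hf => eq_neg_of_add_eq_zero_left <| by
      rw [← inner_add_right]
      exact (Submodule.mem_orthogonal' _ η).1 hη _ ⟨ψ, f, hf, rfl⟩
  have hinv : ∀ t ψ, (∃ f, IsEntireOrbit U ψ f) → ⟪η, U t ψ⟫_ℂ = ⟪η, ψ⟫_ℂ := by
    rintro t ψ ⟨f, hf⟩
    have hexp := hf.map_eq_exp_mul hU (innerSL ℂ η) (lam := 0) (b := 2 * β) (by simpa) ?_ t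
    · simpa using hexp
    intro z
    have h₁ := horth _ _ (hf.shift hU z)
    have h₂ := horth _ _ ((hf.shift hU (-Complex.I * β + z)).map G hUG)
    simp only [hG] at h₂
    simp only [innerSL_apply_apply, Complex.ofReal_zero, zero_mul, Complex.exp_zero, one_mul]
    rw [h₁, h₂, neg_neg]
    congr 2
    push_cast
    ring
  refine hker η fun t => hU.dense_entireVectors.eq_of_inner_left (𝕜 := ℂ) fun ψ hψ => ?_
  have hU_inv : U t (U (-t) ψ) = ψ := by rw [← hU.add_apply, add_neg_cancel, hU.zero_apply]
  rw [← hinv (-t) ψ hψ]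
  conv_lhs => rw [← hU_inv]
  exact LinearIsometryEquiv.inner_map_map _ _ _

end TwistedRange

/-! ### Analytic elements and the KMS relations -/

namespace Dynamics.IsAnalyticExt

variable {d : Dynamics A} {a b : A} {f g : ℂ → A}

theorem add (hf : d.IsAnalyticExt a f) (hg : d.IsAnalyticExt b g) :
    d.IsAnalyticExt (a + b) fun z => f z + g z :=
  ⟨hf.1.add hg.1, fun t => by simp [hf.2, hg.2]⟩

theorem mul (hf : d.IsAnalyticExt a f) (hg : d.IsAnalyticExt b g) :
    d.IsAnalyticExt (a * b) fun z => f z * g z :=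
  ⟨hf.1.mul hg.1, fun t => by simp [hf.2, hg.2]⟩

theorem algebraMap (d : Dynamics A) (z : ℂ) :
    d.IsAnalyticExt (algebraMap ℂ A z) fun _ => algebraMap ℂ A z :=
  ⟨differentiable_const _, fun t => by rw [Algebra.algebraMap_eq_smul_one, map_smul, map_one]⟩

end Dynamics.IsAnalyticExt

/-- The graded CAR system: `d` and `γ` are the Bogoliubov dynamics and grading of a unitary group
`U t = e^{itH₀}` with `ker H₀ = 0` and of a selfadjoint unitary `G` commuting with it. -/
structure IsBogoliubovSystem {H : Type*} [NormedAddCommGroup H] [InnerProductSpace ℂ H]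
    (r : CARrep H A) (U : ℝ → H ≃ₗᵢ[ℂ] H) (d : Dynamics A) (G : H →L[ℂ] H)
    (γ : A ≃⋆ₐ[ℂ] A) : Prop where
  isIsometryGroup : IsIsometryGroup U
  inner_map_left : ∀ x y, ⟪G x, y⟫_ℂ = ⟪x, G y⟫_ℂ
  map_map : ∀ x, G (G x) = x
  comm : ∀ (t : ℝ) (ξ), U t (G ξ) = G (U t ξ)
  eq_zero_of_invariant : ∀ φ : H, (∀ t : ℝ, U t φ = φ) → φ = 0
  dynamics_c : ∀ (t : ℝ) (φ), d.α t (r.c φ) = r.c (U t φ)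
  grading_c : ∀ φ, γ (r.c φ) = r.c (G φ)

namespace IsBogoliubovSystem

variable {H : Type*} [NormedAddCommGroup H] [InnerProductSpace ℂ H] {r : CARrep H A}
  {U : ℝ → H ≃ₗᵢ[ℂ] H} {d : Dynamics A} {G : H →L[ℂ] H} {γ : A ≃⋆ₐ[ℂ] A}

theorem ungraded (h : IsBogoliubovSystem r U d G γ) :
    IsBogoliubovSystem r U d (.id ℂ H) (.refl ℂ A) where
  isIsometryGroup := h.isIsometryGroup
  inner_map_left _ _ := rfl
  map_map _ := rfl
  comm _ _ := rfl
  eq_zero_of_invariant := h.eq_zero_of_invariant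
  dynamics_c := h.dynamics_c
  grading_c _ := rfl

theorem grading_grading (h : IsBogoliubovSystem r U d G γ) (a : A) : γ (γ a) = a := by
  have hγ : Continuous γ := (NonUnitalStarAlgHom.isometry γ γ.injective).continuous
  induction a using r.induction_on with
  | hclosed => exact isClosed_eq (hγ.comp hγ) continuous_id
  | hc φ => rw [h.grading_c, h.grading_c, h.map_map]
  | hstar φ => rw [map_star, map_star, h.grading_c, h.grading_c, h.map_map]
  | halg z => simp only [Algebra.algebraMap_eq_smul_one, map_smul, map_one]
  | hadd a b ha hb => rw [map_add, map_add, ha, hb]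
  | hmul a b ha hb => rw [map_mul, map_mul, ha, hb]

theorem isAnalyticExt_star_c (h : IsBogoliubovSystem r U d G γ) {ψ : H} {f : ℂ → H}
    (hf : IsEntireOrbit U ψ f) :
    d.IsAnalyticExt (star (r.c ψ)) fun z => star (r.c (f z)) :=
  ⟨r.creation.differentiable.comp hf.1, fun t => by simp only [hf.2, map_star, h.dynamics_c]⟩

/-- `φ ↦ a(φ)` is antilinear, so the extension is conjugated in the complex variable. -/
theorem isAnalyticExt_c (h : IsBogoliubovSystem r U d G γ) {ψ : H} {f : ℂ → H}
    (hf : IsEntireOrbit U ψ f) :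
    d.IsAnalyticExt (r.c ψ) fun z => r.c (f (starRingEnd ℂ z)) := by
  refine ⟨fun z => ?_, fun t => by simp only [Complex.conj_ofReal, hf.2, h.dynamics_c]⟩
  simpa [Function.comp_def] using ((h.isAnalyticExt_star_c hf).1 (starRingEnd ℂ z)).star_conj

theorem dense_analytic [CompleteSpace H] (h : IsBogoliubovSystem r U d G γ) :
    Dense {b : A | ∃ f, d.IsAnalyticExt b f} := by
  intro a
  have hdense := h.isIsometryGroup.dense_entireVectors
  induction a using r.induction_on with
  | hclosed => exact isClosed_closure
  | hc φ =>
    exact map_mem_closure r.continuous_c (hdense φ) fun _ ⟨_, hf⟩ => ⟨_, h.isAnalyticExt_c hf⟩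
  | hstar φ =>
    exact map_mem_closure (f := r.creation) r.creation.continuous (hdense φ)
      fun _ ⟨_, hf⟩ => ⟨_, h.isAnalyticExt_star_c hf⟩
  | halg z => exact subset_closure ⟨_, .algebraMap d z⟩
  | hadd a b ha hb =>
    exact map_mem_closure₂ continuous_add ha hb fun _ ⟨_, hf⟩ _ ⟨_, hg⟩ => ⟨_, hf.add hg⟩
  | hmul a b ha hb =>
    exact map_mem_closure₂ continuous_mul ha hb fun _ ⟨_, hf⟩ _ ⟨_, hg⟩ => ⟨_, hf.mul hg⟩

variable {β : ℝ} {ρ : A →L[ℂ] ℂ}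

theorem map_mul_analytic [CompleteSpace H] (h : IsBogoliubovSystem r U d G γ)
    (hρ : d.IsTwistedKMS γ β ρ) {b : A} {f : ℂ → A} (hb : d.IsAnalyticExt b f) (a : A) :
    ρ (a * f (Complex.I * β)) = ρ (b * γ a) := by
  have hγ : Continuous γ := (NonUnitalStarAlgHom.isometry γ γ.injective).continuous
  have hclosed : IsClosed {a | ρ (a * f (Complex.I * β)) = ρ (b * γ a)} :=
    isClosed_eq (by fun_prop) (by fun_prop)
  exact closure_minimal (s := {a | ∃ g, d.IsAnalyticExt a g})
    (fun _ ⟨_, hg⟩ => hρ.2 _ _ _ _ hg hb) hclosed (h.dense_analytic a)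

theorem map_grading [CompleteSpace H] (h : IsBogoliubovSystem r U d G γ)
    (hρ : d.IsTwistedKMS γ β ρ) (a : A) : ρ (γ a) = ρ a := by
  simpa using (h.map_mul_analytic hρ (.algebraMap d 1) a).symm

theorem map_mul_c [CompleteSpace H] (h : IsBogoliubovSystem r U d G γ)
    (hρ : d.IsTwistedKMS γ β ρ) {ψ : H} {f : ℂ → H} (hf : IsEntireOrbit U ψ f) (X : A) :
    ρ (X * r.c (G (f (-Complex.I * β)))) = ρ (r.c ψ * X) := by
  have hkms := h.map_mul_analytic hρ (h.isAnalyticExt_c hf) (γ X)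
  have hconj : starRingEnd ℂ (Complex.I * β) = -Complex.I * β := by simp
  rw [h.grading_grading, hconj] at hkms
  rw [← hkms, ← h.map_grading hρ, map_mul, h.grading_c, h.map_map]

theorem map_mul_star_c [CompleteSpace H] (h : IsBogoliubovSystem r U d G γ)
    (hρ : d.IsTwistedKMS γ β ρ) {ψ : H} {f : ℂ → H} (hf : IsEntireOrbit U ψ f) (X : A) :
    ρ (X * star (r.c ψ)) = ρ (star (r.c (G (f (-Complex.I * β)))) * X) := by
  have horbit := (hf.shift h.isIsometryGroup (-Complex.I * β)).map G h.comm
  have hkms := h.map_mul_analytic hρ (h.isAnalyticExt_star_c horbit) (γ X)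
  have hψ : f (Complex.I * β + -Complex.I * β) = ψ := by
    rw [neg_mul, add_neg_cancel, ← Complex.ofReal_zero, hf.2, h.isIsometryGroup.zero_apply]
  rw [h.grading_grading, hψ] at hkms
  rw [← hkms, ← h.map_grading hρ, map_mul, map_star, h.grading_c]

end IsBogoliubovSystem

/-! ### Wick's theorem -/

section Wick

variable {H : Type*} [NormedAddCommGroup H] [InnerProductSpace ℂ H] {U : ℝ → H ≃ₗᵢ[ℂ] H}
  {G : H →L[ℂ] H} {β : ℝ}

/-- Families of `n`-point values obeying the recursion that the twisted KMS condition forces when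
the first field argument is `ψ + G e^{βH₀} ψ` and the number of remaining ones is odd. -/
structure IsWickFamily (U : ℝ → H ≃ₗᵢ[ℂ] H) (G : H →L[ℂ] H) (β : ℝ) (w : List H → ℂ) : Prop where
  continuous_cons : ∀ L, Continuous fun ξ => w (ξ :: L)
  eq_zero_of_odd : ∀ L, Odd L.length → w L = 0
  cons_eq : ∀ ψ f, IsEntireOrbit U ψ f → ∀ L, Odd L.length →
    w ((ψ + G (f (-Complex.I * β))) :: L) = ∑ j ∈ Finset.range L.length,
      (-1 : ℂ) ^ j * (⟪L.getD j 0, ψ⟫_ℂ + ⟪G (f (-Complex.I * β)), L.getD j 0⟫_ℂ) *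
        w (L.eraseIdx j)

namespace IsWickFamily

variable {w w' : List H → ℂ}

theorem const_mul (hw : IsWickFamily U G β w) (c : ℂ) :
    IsWickFamily U G β fun L => c * w L where
  continuous_cons L := (hw.continuous_cons L).const_mul c
  eq_zero_of_odd L hL := by rw [hw.eq_zero_of_odd L hL, mul_zero]
  cons_eq ψ f hf L hL := by
    rw [hw.cons_eq ψ f hf L hL, Finset.mul_sum]
    exact Finset.sum_congr rfl fun j _ => by ring

theorem unique (hw : IsWickFamily U G β w) (hw' : IsWickFamily U G β w')
    (hdense : Dense (twistedRange U G β : Set H)) (hnil : w [] = w' []) (L : List H) :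
    w L = w' L := by
  induction hn : L.length using Nat.strong_induction_on generalizing L with
  | _ n ih =>
    match L with
    | [] => exact hnil
    | ξ :: L =>
      rw [List.length_cons] at hn
      rcases Nat.even_or_odd L.length with hL | hL
      · rw [hw.eq_zero_of_odd (ξ :: L) hL.add_one, hw'.eq_zero_of_odd (ξ :: L) hL.add_one]
      refine congrFun ((hw.continuous_cons L).ext_on hdense (hw'.continuous_cons L) ?_) ξ
      rintro _ ⟨ψ, f, hf, rfl⟩
      beta_reduce
      rw [hw.cons_eq ψ f hf L hL, hw'.cons_eq ψ f hf L hL]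
      refine Finset.sum_congr rfl fun j hj => ?_
      have hlen := List.length_eraseIdx_add_one (Finset.mem_range.1 hj)
      rw [ih (L.eraseIdx j).length (by omega) _ rfl]

end IsWickFamily

/-- `T` is the covariance operator `T_β^G = i(1 - G e^{βH₀})(1 + G e^{βH₀})⁻¹`, characterized on
the dense range of `1 + G e^{βH₀}`. -/
structure IsCovariance (U : ℝ → H ≃ₗᵢ[ℂ] H) (G : H →L[ℂ] H) (β : ℝ) (T : H →L[ℂ] H) : Prop where
  inner_map_left : ∀ x y, ⟪T x, y⟫_ℂ = -⟪x, T y⟫_ℂ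
  map_add : ∀ φ f, IsEntireOrbit U φ f →
    T (φ + G (f (-Complex.I * β))) = Complex.I • (φ - G (f (-Complex.I * β)))

theorem qfVal_nil (T : H →L[ℂ] H) : qfVal T [] = 1 := by
  rw [qfVal]

theorem qfVal_cons (T : H →L[ℂ] H) (ξ : H) (L : List H) :
    qfVal T (ξ :: L) = ∑ j ∈ Finset.range L.length,
      (-1 : ℂ) ^ j * twoPt T ξ (L.getD j 0) * qfVal T (L.eraseIdx j) := by
  rw [qfVal]

theorem qfVal_eq_zero_of_odd (T : H →L[ℂ] H) (L : List H) (hL : Odd L.length) : qfVal T L = 0 := by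
  induction hn : L.length using Nat.strong_induction_on generalizing L with
  | _ n ih =>
    match L with
    | [] => simp at hL
    | ξ :: L =>
      rw [List.length_cons] at hL hn
      rw [qfVal_cons]
      refine Finset.sum_eq_zero fun j hj => ?_
      have hlen := List.length_eraseIdx_add_one (Finset.mem_range.1 hj)
      rw [ih (L.eraseIdx j).length (by omega) _ (by grind) rfl, mul_zero]

namespace IsCovariance

variable {T : H →L[ℂ] H}

theorem twoPt_add (hT : IsCovariance U G β T) {ψ : H} {f : ℂ → H} (hf : IsEntireOrbit U ψ f)
    (η : H) : twoPt T (ψ + G (f (-Complex.I * β))) η =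
      ⟪η, ψ⟫_ℂ + ⟪G (f (-Complex.I * β)), η⟫_ℂ := by
  have hadj := hT.inner_map_left (ψ + G (f (-Complex.I * β))) η
  rw [hT.map_add _ _ hf] at hadj
  rw [twoPt, ← neg_neg (⟪_, T η⟫_ℂ), ← hadj]
  have hre : (⟪η, ψ⟫_ℂ).re = (⟪ψ, η⟫_ℂ).re := inner_re_symm (𝕜 := ℂ) η ψ
  have him : (⟪η, ψ⟫_ℂ).im = -(⟪ψ, η⟫_ℂ).im := inner_im_symm (𝕜 := ℂ) η ψ
  simp only [inner_add_left, inner_smul_left, inner_sub_left]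
  apply Complex.ext
  · simp [hre, sub_eq_add_neg]
  · simp [him, sub_eq_add_neg, add_comm]

theorem isWickFamily (hT : IsCovariance U G β T) : IsWickFamily U G β (qfVal T) where
  continuous_cons L := by
    simp only [qfVal_cons, twoPt]
    fun_prop
  eq_zero_of_odd := qfVal_eq_zero_of_odd T
  cons_eq ψ f hf L _ := by simp only [qfVal_cons, hT.twoPt_add hf]

theorem commute (hT : IsCovariance U G β T) (hdense : Dense (twistedRange U G β : Set H))
    {B : H →L[ℂ] H} (hBU : ∀ t ξ, U t (B ξ) = B (U t ξ)) (hBG : ∀ x, B (G x) = G (B x)) (x : H) :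
    T (B x) = B (T x) := by
  refine congrFun ((T.comp B).continuous.ext_on hdense (B.comp T).continuous ?_) x
  rintro _ ⟨ψ, f, hf, rfl⟩
  have hB := hT.map_add _ _ (hf.map B hBU)
  rw [ContinuousLinearMap.comp_apply, ContinuousLinearMap.comp_apply, hT.map_add _ _ hf,
    _root_.map_add, map_smul, map_sub, hBG, hB]

end IsCovariance

end Wick

namespace IsBogoliubovSystem

variable {H : Type*} [NormedAddCommGroup H] [InnerProductSpace ℂ H] [CompleteSpace H]
  {r : CARrep H A} {U : ℝ → H ≃ₗᵢ[ℂ] H} {d : Dynamics A} {G : H →L[ℂ] H} {γ : A ≃⋆ₐ[ℂ] A}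
  {β : ℝ} {ρ : A →L[ℂ] ℂ}

theorem dense_twistedRange (h : IsBogoliubovSystem r U d G γ) (hβ : β ≠ 0) :
    Dense (twistedRange U G β : Set H) :=
  _root_.dense_twistedRange h.isIsometryGroup h.eq_zero_of_invariant h.map_map h.comm hβ

theorem map_c_mul_fieldProd (h : IsBogoliubovSystem r U d G γ) (hρ : d.IsTwistedKMS γ β ρ)
    {ψ : H} {f : ℂ → H} (hf : IsEntireOrbit U ψ f) (L : List H) :
    ρ (r.c (G (f (-Complex.I * β))) * r.fieldProd L) =
      ∑ j ∈ Finset.range L.length, (-1 : ℂ) ^ j * ⟪G (f (-Complex.I * β)), L.getD j 0⟫_ℂ *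
        ρ (r.fieldProd (L.eraseIdx j)) + (-1 : ℂ) ^ L.length * ρ (r.c ψ * r.fieldProd L) := by
  rw [r.mul_fieldProd (r.c_mul_Φ_add _), map_add, map_sum, map_smul, h.map_mul_c hρ hf]
  simp only [map_smul, smul_eq_mul]

theorem map_star_c_mul_fieldProd (h : IsBogoliubovSystem r U d G γ) (hρ : d.IsTwistedKMS γ β ρ)
    {ψ : H} {f : ℂ → H} (hf : IsEntireOrbit U ψ f) (L : List H) :
    ρ (star (r.c ψ) * r.fieldProd L) =
      ∑ j ∈ Finset.range L.length, (-1 : ℂ) ^ j * ⟪L.getD j 0, ψ⟫_ℂ *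
        ρ (r.fieldProd (L.eraseIdx j)) +
        (-1 : ℂ) ^ L.length * ρ (star (r.c (G (f (-Complex.I * β)))) * r.fieldProd L) := by
  rw [r.mul_fieldProd (r.star_c_mul_Φ_add _), map_add, map_sum, map_smul, h.map_mul_star_c hρ hf]
  simp only [map_smul, smul_eq_mul]

/-- For a word of odd length the recursion has a sign `-1` on the dense range of
`1 - G e^{βH₀}` that makes the leading terms cancel. -/
theorem map_fieldProd_eq_zero_of_odd (h : IsBogoliubovSystem r U d G γ) (hβ : β ≠ 0)
    (hρ : d.IsTwistedKMS γ β ρ) (L : List H) (hL : Odd L.length) : ρ (r.fieldProd L) = 0 := by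
  induction hn : L.length using Nat.strong_induction_on generalizing L with
  | _ n ih =>
    match L with
    | [] => simp at hL
    | ξ :: L =>
      rw [List.length_cons] at hL hn
      have heven : Even L.length := by grind
      have herase : ∀ j ∈ Finset.range L.length, ρ (r.fieldProd (L.eraseIdx j)) = 0 := by
        intro j hj
        have hlen := List.length_eraseIdx_add_one (Finset.mem_range.1 hj)
        exact ih (L.eraseIdx j).length (by omega) _ (by grind) rfl
      have hdense : Dense (twistedRange U (-G) β : Set H) :=
        _root_.dense_twistedRange h.isIsometryGroup h.eq_zero_of_invariant (by simp [h.map_map])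
          (by simp [h.comm]) hβ
      refine congrFun ((ρ.continuous.comp (r.continuous_fieldProd_cons L)).ext_on hdense
        continuous_const ?_) ξ
      rintro _ ⟨ψ, f, hf, rfl⟩
      have hc := h.map_c_mul_fieldProd hρ hf L
      have hstar := h.map_star_c_mul_fieldProd hρ hf L
      rw [heven.neg_one_pow, one_mul,
        Finset.sum_eq_zero fun j hj => by rw [herase j hj, mul_zero], zero_add] at hc hstar
      rw [Function.comp_apply, neg_apply, CARrep.fieldProd_cons, CARrep.Φ_add, CARrep.Φ_neg,
        CARrep.Φ, CARrep.Φ, add_mul, neg_mul, add_mul, add_mul, map_add, map_add, map_neg, map_add,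
        hc, hstar]
      ring

theorem isWickFamily (h : IsBogoliubovSystem r U d G γ) (hβ : β ≠ 0)
    (hρ : d.IsTwistedKMS γ β ρ) : IsWickFamily U G β fun L => ρ (r.fieldProd L) where
  continuous_cons L := ρ.continuous.comp (r.continuous_fieldProd_cons L)
  eq_zero_of_odd := h.map_fieldProd_eq_zero_of_odd hβ hρ
  cons_eq ψ f hf L hL := by
    have hc := h.map_c_mul_fieldProd hρ hf L
    have hstar := h.map_star_c_mul_fieldProd hρ hf L
    rw [hL.neg_one_pow] at hc hstar
    simp only [mul_add, add_mul, Finset.sum_add_distrib]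
    rw [CARrep.fieldProd_cons, CARrep.Φ_add, CARrep.Φ, CARrep.Φ, add_mul, add_mul, add_mul,
      map_add, map_add, map_add, hc, hstar]
    ring

theorem eq_of_map_one_eq (h : IsBogoliubovSystem r U d G γ) (hβ : β ≠ 0) {σ : A →L[ℂ] ℂ}
    (hρ : d.IsTwistedKMS γ β ρ) (hσ : d.IsTwistedKMS γ β σ) (hone : ρ 1 = σ 1) : ρ = σ :=
  r.functional_ext <| (h.isWickFamily hβ hρ).unique (h.isWickFamily hβ hσ)
    (h.dense_twistedRange hβ) (by simpa using hone)

theorem map_fieldProd (h : IsBogoliubovSystem r U d G γ) (hβ : β ≠ 0)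
    (hρ : d.IsTwistedKMS γ β ρ) {T : H →L[ℂ] H} (hT : IsCovariance U G β T) (L : List H) :
    ρ (r.fieldProd L) = ρ 1 * qfVal T L :=
  (h.isWickFamily hβ hρ).unique (hT.isWickFamily.const_mul (ρ 1)) (h.dense_twistedRange hβ)
    (by simp [qfVal_nil]) L

end IsBogoliubovSystem

/-! ### The covariance operator -/

theorem CARrep.exists_inner_eq_map_star_c_mul_c {H : Type*} [NormedAddCommGroup H]
    [InnerProductSpace ℂ H] [CompleteSpace H] (r : CARrep H A) (ρ : A →L[ℂ] ℂ) :
    ∃ S : H →L[ℂ] H, ∀ φ ψ, ⟪S φ, ψ⟫_ℂ = ρ (star (r.c ψ) * r.c φ) := by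
  let B : H →L⋆[ℂ] H →L[ℂ] ℂ := LinearMap.mkContinuous₂
    (LinearMap.mk₂'ₛₗ (starRingEnd ℂ) (RingHom.id ℂ) (fun φ ψ => ρ (star (r.c ψ) * r.c φ))
      (fun _ _ _ => by simp only [r.c_add, mul_add, map_add])
      (fun _ _ _ => by simp only [r.c_smul, mul_smul_comm, map_smul])
      (fun _ _ _ => by simp only [r.c_add, star_add, add_mul, map_add])
      (fun _ _ _ => by simp [r.c_smul])) ‖ρ‖ fun φ ψ => by
        refine (ρ.le_opNorm _).trans ?_
        rw [mul_assoc, mul_comm ‖φ‖]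
        gcongr
        refine (norm_mul_le _ _).trans ?_
        rw [norm_star]
        gcongr <;> exact r.norm_c_le _
  exact ⟨InnerProductSpace.continuousLinearMapOfBilin B, fun φ ψ =>
    InnerProductSpace.continuousLinearMapOfBilin_apply B φ ψ⟩

/-- With `⟪S φ, ψ⟫ = ρ (a*(ψ) a(φ)) / ρ 1` the KMS condition says that `S` inverts
`1 + G e^{βH₀}`, and `T = -i(1 - 2S)`. -/
theorem IsBogoliubovSystem.exists_isCovariance {H : Type*} [NormedAddCommGroup H]
    [InnerProductSpace ℂ H] [CompleteSpace H] {r : CARrep H A} {U : ℝ → H ≃ₗᵢ[ℂ] H}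
    {d : Dynamics A} {G : H →L[ℂ] H} {γ : A ≃⋆ₐ[ℂ] A} {β : ℝ} {ρ : A →L[ℂ] ℂ}
    (h : IsBogoliubovSystem r U d G γ) (hρ : d.IsTwistedKMS γ β ρ) (hherm : IsHermitian ρ)
    (hone : ρ 1 ≠ 0) : ∃ T : H →L[ℂ] H, IsCovariance U G β T := by
  obtain ⟨S, hS⟩ := r.exists_inner_eq_map_star_c_mul_c ((ρ 1)⁻¹ • ρ)
  simp only [smul_apply, smul_eq_mul] at hS
  have hsymm : ∀ φ ψ, ⟪S φ, ψ⟫_ℂ = ⟪φ, S ψ⟫_ℂ := fun φ ψ => by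
    rw [← inner_conj_symm φ, hS, hS, map_mul (starRingEnd ℂ), map_inv₀, ← hherm, star_one, ← hherm,
      star_mul, star_star]
  have hinv : ∀ ψ f, IsEntireOrbit U ψ f → S (ψ + G (f (-Complex.I * β))) = ψ := fun ψ f hf => by
    refine ext_inner_left ℂ fun x => ?_
    rw [← hsymm, hS, r.c_add, star_add, add_mul, map_add, ← h.map_mul_star_c hρ hf (r.c x),
      ← map_add, r.car₁, map_smul, smul_eq_mul]
    field_simp
  refine ⟨-Complex.I • (.id ℂ H - (2 : ℂ) • S), ⟨fun x y => ?_, fun ψ f hf => ?_⟩⟩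
  · simp [inner_smul_left, inner_smul_right, inner_sub_left, inner_sub_right, hsymm,
      Complex.conj_ofNat]
  · simp only [smul_apply, sub_apply,
      ContinuousLinearMap.id_apply, hinv ψ f hf]
    module

/-! ### Reflections -/

namespace CARrep

variable {H : Type*} [NormedAddCommGroup H] [InnerProductSpace ℂ H] (r : CARrep H A) {ξ η : H}

/-- The parity `1 - 2 a*(ξ) a(ξ)` of the mode `ξ`. For a unit vector `ξ` it is a selfadjoint
unitary that implements the Bogoliubov automorphism of the reflection in `ξ`. -/
def reflection (ξ : H) : A := 1 - (2 : ℂ) • (star (r.c ξ) * r.c ξ)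

@[simp]
theorem star_reflection (ξ : H) : star (r.reflection ξ) = r.reflection ξ := by
  simp [reflection]

theorem star_c_mul_c_add (hξ : ‖ξ‖ = 1) :
    star (r.c ξ) * r.c ξ + r.c ξ * star (r.c ξ) = 1 := by
  rw [r.car₁, inner_self_eq_norm_sq_to_K, hξ]
  simp

theorem c_mul_star_c_mul_c (hξ : ‖ξ‖ = 1) : r.c ξ * (star (r.c ξ) * r.c ξ) = r.c ξ := by
  rw [← mul_assoc, eq_sub_of_add_eq' (r.star_c_mul_c_add hξ), sub_mul, mul_assoc, r.c_mul_self,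
    mul_zero, one_mul, sub_zero]

theorem reflection_eq_smul_fieldProd (hξ : ‖ξ‖ = 1) :
    r.reflection ξ = -Complex.I • r.fieldProd [ξ, Complex.I • ξ] := by
  have hstar : star (r.c ξ) * star (r.c ξ) = 0 := by rw [← star_mul, r.c_mul_self, star_zero]
  calc r.reflection ξ = (star (r.c ξ) + r.c ξ) * (star (r.c ξ) - r.c ξ) := by
        rw [reflection, ← r.star_c_mul_c_add hξ, add_mul, mul_sub, mul_sub, hstar, r.c_mul_self,
          two_smul]
        abel
    _ = -Complex.I • r.fieldProd [ξ, Complex.I • ξ] := by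
        rw [fieldProd_cons, fieldProd_cons, fieldProd_nil, mul_one, Φ_I_smul, mul_smul_comm,
          smul_smul, neg_mul, Complex.I_mul_I, neg_neg, one_smul, Φ]

theorem reflection_mul_self (hξ : ‖ξ‖ = 1) : r.reflection ξ * r.reflection ξ = 1 := by
  have hidem : star (r.c ξ) * r.c ξ * (star (r.c ξ) * r.c ξ) = star (r.c ξ) * r.c ξ := by
    rw [mul_assoc, r.c_mul_star_c_mul_c hξ]
  rw [reflection, sub_mul, mul_sub, mul_sub, smul_mul_smul_comm, hidem, one_mul, one_mul, mul_one]
  module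

theorem reflection_mul_c (hξ : ‖ξ‖ = 1) (x : H) :
    r.reflection ξ * r.c x = r.c (x - (2 * ⟪ξ, x⟫_ℂ) • ξ) * r.reflection ξ := by
  have hanti : r.c ξ * r.c x = -(r.c x * r.c ξ) := eq_neg_of_add_eq_zero_left (r.car₂ ξ x)
  have hcar : star (r.c ξ) * r.c x = ⟪x, ξ⟫_ℂ • (1 : A) - r.c x * star (r.c ξ) :=
    eq_sub_of_add_eq (r.car₁ ξ x)
  have hneg : r.c ξ * r.reflection ξ = -r.c ξ := by
    rw [reflection, mul_sub, mul_smul_comm, r.c_mul_star_c_mul_c hξ, mul_one]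
    module
  rw [c_sub, sub_mul, r.c_smul, smul_mul_assoc, hneg, reflection, sub_mul, mul_sub, smul_mul_assoc,
    mul_assoc, hanti, mul_neg, ← mul_assoc, hcar, sub_mul, map_mul, inner_conj_symm,
    Complex.conj_ofNat]
  simp only [smul_mul_assoc, one_mul, mul_one, mul_smul_comm, smul_neg, smul_sub, smul_smul,
    mul_assoc, sub_neg_eq_add]
  abel

theorem commute_reflection_c (hξ : ‖ξ‖ = 1) (h : ⟪ξ, η⟫_ℂ = 0) :
    Commute (r.reflection ξ) (r.c η) := by
  rw [commute_iff_eq, r.reflection_mul_c hξ, h, mul_zero, zero_smul, sub_zero]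

theorem commute_reflection_reflection (hξ : ‖ξ‖ = 1) (h : ⟪ξ, η⟫_ℂ = 0) :
    Commute (r.reflection ξ) (r.reflection η) := by
  have hc := r.commute_reflection_c hξ h
  have hstar : Commute (r.reflection ξ) (star (r.c η)) := by
    simpa using hc.star_star
  exact (Commute.one_right _).sub_right ((hstar.mul_right hc).smul_right 2)

theorem reflection_mul_c_self (hξ : ‖ξ‖ = 1) :
    r.reflection ξ * r.c ξ = -(r.c ξ * r.reflection ξ) := by
  rw [r.reflection_mul_c hξ, inner_self_eq_norm_sq_to_K, hξ, ← neg_mul, ← c_neg]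
  congr 2
  simp only [Complex.coe_algebraMap, Complex.ofReal_one, one_pow]
  module

theorem reflection_smul {z : ℂ} (hz : ‖z‖ = 1) (ξ : H) :
    r.reflection (z • ξ) = r.reflection ξ := by
  rw [reflection, reflection, r.c_smul, star_smul, smul_mul_smul_comm, RCLike.star_def,
    Complex.conj_conj, Complex.mul_conj', hz]
  simp

/-- The product of the reflections in `e 0, …, e (n - 1)`. -/
def reflectionProd (e : ℕ → H) (n : ℕ) : A :=
  ((List.range n).map fun k => r.reflection (e k)).prod

variable (e : ℕ → H)

@[simp]
theorem reflectionProd_zero : r.reflectionProd e 0 = 1 := rfl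

theorem reflectionProd_succ (n : ℕ) :
    r.reflectionProd e (n + 1) = r.reflectionProd e n * r.reflection (e n) := by
  simp [reflectionProd, List.range_succ]

theorem list_prod_reflection (L : List H) (hL : ∀ ξ ∈ L, ‖ξ‖ = 1) :
    (L.map r.reflection).prod =
      (-Complex.I) ^ L.length • r.fieldProd (L.flatMap fun ξ => [ξ, Complex.I • ξ]) := by
  induction L with
  | nil => simp
  | cons ξ L ih =>
    rw [List.map_cons, List.prod_cons, ih fun η hη => hL η (.tail _ hη),
      r.reflection_eq_smul_fieldProd (hL ξ (.head _)), smul_mul_smul_comm, List.length_cons,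
      pow_succ', ← fieldProd_append, List.flatMap_cons]

variable {e}

theorem commute_reflectionProd (he : Orthonormal ℂ e) (n k : ℕ) :
    Commute (r.reflectionProd e n) (r.reflection (e k)) := by
  induction n with
  | zero => exact Commute.one_left _
  | succ n ih =>
    rw [reflectionProd_succ]
    refine ih.mul_left ?_
    rcases eq_or_ne n k with rfl | hne
    · exact Commute.refl _
    · exact r.commute_reflection_reflection (he.1 n) (he.2 hne)

theorem star_reflectionProd (he : Orthonormal ℂ e) (n : ℕ) :
    star (r.reflectionProd e n) = r.reflectionProd e n := by
  induction n with
  | zero => simp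
  | succ n ih =>
    rw [reflectionProd_succ, star_mul, ih, star_reflection, (r.commute_reflectionProd he n n).eq]

theorem reflectionProd_mul_self (he : Orthonormal ℂ e) (n : ℕ) :
    r.reflectionProd e n * r.reflectionProd e n = 1 := by
  induction n with
  | zero => simp
  | succ n ih =>
    rw [reflectionProd_succ, (r.commute_reflectionProd he n n).symm.mul_mul_mul_comm, ih,
      r.reflection_mul_self (he.1 n), one_mul]

theorem commute_reflectionProd_c (he : Orthonormal ℂ e) {x : H} (hx : ∀ k, ⟪e k, x⟫_ℂ = 0)
    (n : ℕ) : Commute (r.reflectionProd e n) (r.c x) := by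
  induction n with
  | zero => exact Commute.one_left _
  | succ n ih =>
    rw [reflectionProd_succ]
    exact ih.mul_left (r.commute_reflection_c (he.1 n) (hx n))

theorem reflectionProd_mul_c (he : Orthonormal ℂ e) (k n : ℕ) :
    r.reflectionProd e n * r.c (e k) =
      (if k < n then (-1 : ℂ) else 1) • (r.c (e k) * r.reflectionProd e n) := by
  induction n with
  | zero => simp
  | succ n ih =>
    rw [reflectionProd_succ, mul_assoc]
    rcases eq_or_ne n k with rfl | hne
    · rw [r.reflection_mul_c_self (he.1 n), mul_neg, ← mul_assoc, ih, if_neg n.lt_irrefl,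
        if_pos n.lt_succ_self, one_smul, mul_assoc, neg_one_smul]
    · rw [(r.commute_reflection_c (he.1 n) (he.2 hne)).eq, ← mul_assoc, ih, smul_mul_assoc,
        mul_assoc]
      simp only [Nat.lt_succ_iff_lt_or_eq, hne.symm, or_false]

end CARrep

/-! ### Expectation values of reflections -/

section QuasifreeValues

variable {H : Type*} [NormedAddCommGroup H] [InnerProductSpace ℂ H] (T : H →L[ℂ] H) (ξ η : H)

theorem twoPt_I_smul_right :
    twoPt T ξ (Complex.I • η) = -((⟪ξ, η⟫_ℂ).im : ℂ) - Complex.I * ((⟪ξ, T η⟫_ℂ).im : ℂ) := by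
  simp [twoPt, sub_eq_add_neg]

theorem twoPt_I_smul_left :
    twoPt T (Complex.I • ξ) η = ((⟪ξ, η⟫_ℂ).im : ℂ) + Complex.I * ((⟪ξ, T η⟫_ℂ).im : ℂ) := by
  simp [twoPt]

theorem twoPt_I_smul_I_smul : twoPt T (Complex.I • ξ) (Complex.I • η) = twoPt T ξ η := by
  simp [twoPt]

theorem twoPt_self_I_smul :
    twoPt T ξ (Complex.I • ξ) = -Complex.I * ((⟪ξ, T ξ⟫_ℂ).im : ℂ) := by
  have him : (⟪ξ, ξ⟫_ℂ).im = 0 := inner_self_im (𝕜 := ℂ) ξ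
  rw [twoPt_I_smul_right, him]
  simp

variable {ξ}

theorem qfVal_cons_cons_of_twoPt_eq_zero {L : List H} (h : ∀ x ∈ L, twoPt T ξ x = 0) :
    qfVal T (ξ :: η :: L) = twoPt T ξ η * qfVal T L := by
  rw [qfVal_cons, List.length_cons, Finset.sum_range_succ', Finset.sum_eq_zero fun j hj => ?_]
  · simp
  · rw [List.getD_cons_succ, List.getD_eq_getElem _ _ (Finset.mem_range.1 hj),
      h _ (List.getElem_mem _), mul_zero, zero_mul]

variable (ξ)

theorem qfVal_pair : qfVal T [ξ, η] = twoPt T ξ η := by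
  rw [qfVal_cons_cons_of_twoPt_eq_zero T η (by simp), qfVal_nil, mul_one]

theorem qfVal_four (ζ χ : H) : qfVal T [ξ, η, ζ, χ] =
    twoPt T ξ η * twoPt T ζ χ - twoPt T ξ ζ * twoPt T η χ + twoPt T ξ χ * twoPt T η ζ := by
  rw [qfVal_cons]
  simp [Finset.sum_range_succ, qfVal_pair]
  ring

variable {T}

theorem qfVal_flatMap_of_eigenvectors {e : ℕ → H} (he : Orthonormal ℂ e) {t : ℕ → ℝ}
    (hT : ∀ k, T (e k) = -(Complex.I * t k) • e k) (l : List ℕ) (hl : l.Nodup) :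
    (-Complex.I) ^ l.length * qfVal T ((l.map e).flatMap fun ξ => [ξ, Complex.I • ξ]) =
      ((l.map t).prod : ℝ) := by
  induction l with
  | nil => simp [qfVal_nil]
  | cons k l ih =>
    obtain ⟨hk, hl⟩ := List.nodup_cons.1 hl
    have horth : ∀ x ∈ (l.map e).flatMap fun ξ => [ξ, Complex.I • ξ], twoPt T (e k) x = 0 := by
      simp only [List.mem_flatMap, List.mem_map, List.mem_cons, List.not_mem_nil, or_false]
      rintro x ⟨_, ⟨j, hj, rfl⟩, rfl | rfl⟩ <;>
        simp [twoPt, hT, inner_smul_right, he.2 fun hkj : k = j => hk (hkj ▸ hj)]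
    have hself : twoPt T (e k) (Complex.I • e k) = Complex.I * t k := by
      rw [twoPt_self_I_smul, hT, inner_smul_right, inner_self_eq_norm_sq_to_K, he.1]
      simp
    calc (-Complex.I) ^ (k :: l).length *
          qfVal T (((k :: l).map e).flatMap fun ξ => [ξ, Complex.I • ξ])
        = -(Complex.I * Complex.I) * t k *
          ((-Complex.I) ^ l.length * qfVal T ((l.map e).flatMap fun ξ => [ξ, Complex.I • ξ])) := by
          rw [List.map_cons, List.flatMap_cons, List.cons_append, List.cons_append, List.nil_append,
            qfVal_cons_cons_of_twoPt_eq_zero T _ horth, hself, List.length_cons, pow_succ]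
          ring
      _ = (((k :: l).map t).prod : ℝ) := by
          rw [ih hl, Complex.I_mul_I, List.map_cons, List.prod_cons]
          push_cast
          ring

end QuasifreeValues

/-- On an eigenvector `e` with `H₀ e = lam e` and `G e = g e` the covariance operator is
multiplication by `i(1 - g e^{β lam})/(1 + g e^{β lam})`. -/
theorem IsCovariance.apply_eigenvector {H : Type*} [NormedAddCommGroup H] [InnerProductSpace ℂ H]
    {U : ℝ → H ≃ₗᵢ[ℂ] H} {G T : H →L[ℂ] H} {β : ℝ} (hT : IsCovariance U G β T) {e : H}
    {lam g t : ℝ} (he : ∀ t : ℝ, U t e = Complex.exp (Complex.I * t * lam) • e)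
    (hg : G e = (g : ℂ) • e)
    (ht : t * (1 + g * Real.exp (β * lam)) = g * Real.exp (β * lam) - 1)
    (hne : 1 + g * Real.exp (β * lam) ≠ 0) : T e = -(Complex.I * t) • e := by
  have hexp : Complex.exp (Complex.I * (-Complex.I * β) * lam) = (Real.exp (β * lam) : ℂ) := by
    rw [← mul_assoc, mul_neg, Complex.I_mul_I, neg_neg, one_mul, ← Complex.ofReal_mul,
      Complex.ofReal_exp]
  have hmap := hT.map_add _ _ (.of_eigenvector he)
  simp only [hexp, map_smul, hg, smul_smul] at hmap
  have hne' : (1 + g * Real.exp (β * lam) : ℂ) ≠ 0 := by exact_mod_cast hne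
  have ht' : (t * (1 + g * Real.exp (β * lam)) : ℂ) = g * Real.exp (β * lam) - 1 := by
    exact_mod_cast ht
  refine (smul_right_injective H hne') ?_
  calc (1 + g * Real.exp (β * lam) : ℂ) • T e
      = T (e + (Real.exp (β * lam) * g : ℂ) • e) := by
        rw [_root_.map_add, map_smul, add_smul, one_smul, mul_comm (g : ℂ)]
    _ = -(Complex.I * (g * Real.exp (β * lam) - 1)) • e := by
        rw [hmap]
        module
    _ = (1 + g * Real.exp (β * lam) : ℂ) • (-(Complex.I * t) • e) := by
        rw [← ht', smul_smul]
        ring_nf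

namespace IsBogoliubovSystem

variable {H : Type*} [NormedAddCommGroup H] [InnerProductSpace ℂ H] [CompleteSpace H]
  {r : CARrep H A} {U : ℝ → H ≃ₗᵢ[ℂ] H} {d : Dynamics A} {G : H →L[ℂ] H} {γ : A ≃⋆ₐ[ℂ] A}
  {β : ℝ} {ρ : A →L[ℂ] ℂ} {T : H →L[ℂ] H} {ξ η : H}

theorem map_reflection (h : IsBogoliubovSystem r U d G γ) (hβ : β ≠ 0)
    (hρ : d.IsTwistedKMS γ β ρ) (hT : IsCovariance U G β T) (hξ : ‖ξ‖ = 1) :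
    ρ (r.reflection ξ) = ρ 1 * (-(⟪ξ, T ξ⟫_ℂ).im : ℝ) := by
  rw [r.reflection_eq_smul_fieldProd hξ, map_smul, h.map_fieldProd hβ hρ hT, qfVal_pair,
    twoPt_self_I_smul, smul_eq_mul, Complex.ofReal_neg]
  linear_combination (ρ 1 * ((⟪ξ, T ξ⟫_ℂ).im : ℂ)) * Complex.I_mul_I

theorem map_reflection_mul_reflection (h : IsBogoliubovSystem r U d G γ) (hβ : β ≠ 0)
    (hρ : d.IsTwistedKMS γ β ρ) (hT : IsCovariance U G β T) (hξ : ‖ξ‖ = 1) (hη : ‖η‖ = 1) :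
    ρ (r.reflection ξ * r.reflection η) =
      ρ 1 * ((-(⟪ξ, T ξ⟫_ℂ).im : ℝ) * (-(⟪η, T η⟫_ℂ).im : ℝ) +
        twoPt T ξ η ^ 2 + twoPt T ξ (Complex.I • η) ^ 2) := by
  have hskew : twoPt T (Complex.I • ξ) η = -twoPt T ξ (Complex.I • η) := by
    rw [twoPt_I_smul_left, twoPt_I_smul_right]
    ring
  rw [r.reflection_eq_smul_fieldProd hξ, r.reflection_eq_smul_fieldProd hη, smul_mul_smul_comm,
    ← r.fieldProd_append, map_smul, h.map_fieldProd hβ hρ hT, List.cons_append, List.cons_append,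
    List.nil_append, qfVal_four, twoPt_I_smul_I_smul, hskew, twoPt_self_I_smul, twoPt_self_I_smul,
    smul_eq_mul, neg_mul_neg, Complex.I_mul_I]
  push_cast
  linear_combination (-(ρ 1 * ((⟪ξ, T ξ⟫_ℂ).im : ℂ) * ((⟪η, T η⟫_ℂ).im : ℂ))) * Complex.I_mul_I

theorem map_reflectionProd (h : IsBogoliubovSystem r U d G γ) (hβ : β ≠ 0)
    (hρ : d.IsTwistedKMS γ β ρ) (hT : IsCovariance U G β T) {e : ℕ → H} (he : Orthonormal ℂ e)
    {t : ℕ → ℝ} (hTe : ∀ k, T (e k) = -(Complex.I * t k) • e k) (n : ℕ) :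
    ρ (r.reflectionProd e n) = ρ 1 * ((∏ k ∈ Finset.range n, t k : ℝ) : ℂ) := by
  have hprod := r.list_prod_reflection ((List.range n).map e) (by simp [he.1])
  rw [List.map_map, List.length_map] at hprod
  rw [CARrep.reflectionProd, ← List.toFinset_range,
    List.prod_toFinset _ List.nodup_range,
    ← qfVal_flatMap_of_eigenvectors he hTe _ List.nodup_range]
  exact (congrArg ρ hprod).trans (by
    rw [map_smul, h.map_fieldProd hβ hρ hT, smul_eq_mul, mul_left_comm])

end IsBogoliubovSystem

/-! ### Asymptotic implementation of the grading -/

theorem isClosed_tendsto_starAlgEquiv {ι : Type*} {l : Filter ι} (F : ι → A ≃⋆ₐ[ℂ] A)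
    (γ : A ≃⋆ₐ[ℂ] A) : IsClosed {a | Tendsto (fun i => F i a) l (𝓝 (γ a))} :=
  (LipschitzWith.uniformEquicontinuous (fun i => ⇑(F i)) 1 fun i =>
    (NonUnitalStarAlgHom.isometry (F i) (F i).injective).lipschitz).equicontinuous
      |>.isClosed_setOfPred_tendsto (NonUnitalStarAlgHom.isometry γ γ.injective).continuous

namespace CARrep

variable {H : Type*} [NormedAddCommGroup H] [InnerProductSpace ℂ H] (r : CARrep H A)
  {ι : Type*} {l : Filter ι} {F : ι → A ≃⋆ₐ[ℂ] A} {γ : A ≃⋆ₐ[ℂ] A}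

theorem tendsto_of_tendsto_c
    (hF : ∀ φ, Tendsto (fun i => F i (r.c φ)) l (𝓝 (γ (r.c φ)))) (a : A) :
    Tendsto (fun i => F i a) l (𝓝 (γ a)) := by
  induction a using r.induction_on with
  | hclosed => exact isClosed_tendsto_starAlgEquiv F γ
  | hc φ => exact hF φ
  | hstar φ => simpa only [map_star] using (hF φ).star
  | halg z =>
    simpa only [Algebra.algebraMap_eq_smul_one, map_smul, map_one] using tendsto_const_nhds
  | hadd a b ha hb => simpa only [map_add] using ha.add hb
  | hmul a b ha hb => simpa only [map_mul] using ha.mul hb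

theorem tendsto_c_of_mem_closure_span {s : Set H}
    (hs : ∀ φ ∈ s, Tendsto (fun i => F i (r.c φ)) l (𝓝 (γ (r.c φ)))) {φ : H}
    (hφ : φ ∈ (Submodule.span ℂ s).topologicalClosure) :
    Tendsto (fun i => F i (r.c φ)) l (𝓝 (γ (r.c φ))) := by
  refine closure_minimal (t := {φ | Tendsto (fun i => F i (r.c φ)) l (𝓝 (γ (r.c φ)))}) ?_
    ((isClosed_tendsto_starAlgEquiv F γ).preimage r.continuous_c) hφ
  intro φ hφ
  induction hφ using Submodule.span_induction with
  | mem φ hφ => exact hs φ hφ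
  | zero =>
    have hzero : r.c 0 = 0 := by simpa using r.c_smul 0 0
    simpa only [Set.mem_ofPred_eq, hzero, map_zero] using tendsto_const_nhds
  | add φ ψ _ _ hφ hψ => simpa only [Set.mem_ofPred_eq, r.c_add, map_add] using hφ.add hψ
  | smul z φ _ hφ =>
    simpa only [Set.mem_ofPred_eq, r.c_smul, map_smul] using hφ.const_smul (starRingEnd ℂ z)

end CARrep

/-- A sequence `V` of selfadjoint unitaries, invariant under the dynamics, whose conjugations
converge pointwise in norm to the automorphism `γ`. -/
structure IsAsymptoticImplementer (d : Dynamics A) (γ : A ≃⋆ₐ[ℂ] A) (V : ℕ → A) : Prop where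
  star_eq : ∀ n, star (V n) = V n
  mul_self : ∀ n, V n * V n = 1
  invariant : ∀ n t, d.α t (V n) = V n
  tendsto : ∀ a, Tendsto (fun n => V n * a * V n) atTop (𝓝 (γ a))

namespace IsBogoliubovSystem

variable {H : Type*} [NormedAddCommGroup H] [InnerProductSpace ℂ H] {r : CARrep H A}
  {U : ℝ → H ≃ₗᵢ[ℂ] H} {d : Dynamics A} {G : H →L[ℂ] H} {γ : A ≃⋆ₐ[ℂ] A} {e : ℕ → H}
  {lam : ℕ → ℝ}

theorem tendsto_reflectionProd_conj_c (h : IsBogoliubovSystem r U d G γ) (he : Orthonormal ℂ e)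
    (hodd : ∀ k, G (e k) = -e k) {x : H} (hx : x ∈ {x | G x = x} ∪ Set.range e) :
    Tendsto (fun n => r.reflectionProd e n * r.c x * r.reflectionProd e n) atTop
      (𝓝 (γ (r.c x))) := by
  rw [h.grading_c]
  rcases hx with hx | ⟨k, rfl⟩
  · have hperp : ∀ k, ⟪e k, x⟫_ℂ = 0 := fun k => by
      have hsymm := h.inner_map_left (e k) x
      rw [hodd, inner_neg_left, show G x = x from hx] at hsymm
      exact self_eq_neg.1 hsymm.symm
    refine tendsto_const_nhds.congr fun n => ?_
    rw [show G x = x from hx, (r.commute_reflectionProd_c he hperp n).eq, mul_assoc,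
      r.reflectionProd_mul_self he, mul_one]
  · refine tendsto_const_nhds.congr' ?_
    filter_upwards [eventually_gt_atTop k] with n hn
    rw [hodd, r.c_neg, r.reflectionProd_mul_c he, if_pos hn, smul_mul_assoc, mul_assoc,
      r.reflectionProd_mul_self he, mul_one, neg_one_smul]

theorem mem_topologicalClosure_span (h : IsBogoliubovSystem r U d G γ)
    (hspan : ∀ φ : H, G φ = -φ → φ ∈ closure (Submodule.span ℂ (Set.range e) : Set H)) (x : H) :
    x ∈ (Submodule.span ℂ ({x | G x = x} ∪ Set.range e)).topologicalClosure := by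
  have heven : x + G x ∈ {x | G x = x} := by
    rw [Set.mem_ofPred_eq, map_add, h.map_map, add_comm]
  have hodd : x - G x ∈ (Submodule.span ℂ (Set.range e)).topologicalClosure :=
    hspan _ (by rw [map_sub, h.map_map, neg_sub])
  rw [show x = (1 / 2 : ℂ) • (x + G x) + (1 / 2 : ℂ) • (x - G x) by module]
  exact add_mem
    (Submodule.smul_mem _ _ (Submodule.le_topologicalClosure _
      (Submodule.subset_span (Or.inl heven))))
    (Submodule.smul_mem _ _ (Submodule.topologicalClosure_mono
      (Submodule.span_mono Set.subset_union_right) hodd))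

theorem dynamics_reflectionProd (h : IsBogoliubovSystem r U d G γ)
    (hU : ∀ (t : ℝ) k, U t (e k) = Complex.exp (Complex.I * t * lam k) • e k) (n : ℕ) (t : ℝ) :
    d.α t (r.reflectionProd e n) = r.reflectionProd e n := by
  have hphase : ∀ k, ‖Complex.exp (Complex.I * t * lam k)‖ = 1 := fun k => by
    rw [show Complex.I * t * lam k = ((t * lam k : ℝ) : ℂ) * Complex.I by push_cast; ring,
      Complex.norm_exp_ofReal_mul_I]
  have hrefl : ∀ ξ, d.α t (r.reflection ξ) = r.reflection (U t ξ) := fun ξ => by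
    simp only [CARrep.reflection, map_sub, map_one, map_smul, map_mul, map_star, h.dynamics_c]
  induction n with
  | zero => exact map_one _
  | succ n ih =>
    rw [r.reflectionProd_succ, map_mul, ih, hrefl, hU, r.reflection_smul (hphase n)]

theorem isAsymptoticImplementer_reflectionProd (h : IsBogoliubovSystem r U d G γ)
    (hE : EigenBasisOdd G U e lam) :
    IsAsymptoticImplementer d γ (r.reflectionProd e) where
  star_eq := r.star_reflectionProd hE.1
  mul_self := r.reflectionProd_mul_self hE.1
  invariant := h.dynamics_reflectionProd hE.2.2.2
  tendsto := by
    obtain ⟨he, hodd, hspan, _⟩ := hE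
    have hunitary : ∀ n, r.reflectionProd e n ∈ unitary A := fun n => by
      simp only [Unitary.mem_iff, r.star_reflectionProd he, r.reflectionProd_mul_self he,
        and_self]
    have hconj : ∀ n a, Unitary.conjStarAlgAut ℂ A ⟨_, hunitary n⟩ a =
        r.reflectionProd e n * a * r.reflectionProd e n := fun n a => by
      rw [Unitary.conjStarAlgAut_apply, r.star_reflectionProd he]
    simp_rw [← hconj]
    refine r.tendsto_of_tendsto_c fun φ =>
      r.tendsto_c_of_mem_closure_span (fun x hx => ?_) (h.mem_topologicalClosure_span hspan φ)
    simp_rw [hconj]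
    exact h.tendsto_reflectionProd_conj_c he hodd hx

end IsBogoliubovSystem

/-! ### Twisted functionals as limits -/

theorem IsState.isHermitian_mul_right {ω : A → ℂ} (h : IsState ω) {v : A} (hv : star v = v)
    (hcomm : ∀ a, ω (a * v) = ω (v * a)) : IsHermitian fun a => ω (a * v) := fun a => by
  beta_reduce
  rw [hcomm, starRingEnd_apply, ← h.map_star, star_mul, hv]

theorem IsState.dominated_mul_right {ω : A → ℂ} (h : IsState ω) {v : A} (hv : star v = v)
    (hvv : v * v = 1) (hcomm : ∀ a, ω (a * v) = ω (v * a)) :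
    Dominated ω fun a => ω (a * v) := by
  refine h.dominated_iff.2 fun a b => ?_
  have hbv : ω (star (b * v) * (b * v)) = ω (star b * b) := by
    rw [star_mul, hv, mul_assoc, ← hcomm]
    congr 1
    calc star b * (b * v) * v = star b * b * (v * v) := by noncomm_ring
      _ = star b * b := by rw [hvv, mul_one]
  simpa only [mul_assoc, hbv] using h.norm_map_star_mul_sq_le a (b * v)

theorem exists_tendsto_of_forall_norm_le {ι α E : Type*} [SeminormedAddCommGroup E]
    [ProperSpace E] (𝓕 : Ultrafilter ι) {F : ι → α → E} {B : α → ℝ}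
    (hF : ∀ i a, ‖F i a‖ ≤ B a) :
    ∃ ρ : α → E, ∀ a, Tendsto (fun i => F i a) 𝓕 (𝓝 (ρ a)) := by
  have hlim : ∀ a, ∃ z, Tendsto (fun i => F i a) 𝓕 (𝓝 z) := fun a => by
    obtain ⟨z, -, hz⟩ := (isCompact_closedBall (0 : E) (B a)).ultrafilter_le_nhds
      (𝓕.map fun i => F i a)
      (le_principal_iff.2 (mem_map.2
        (Eventually.of_forall fun i => mem_closedBall_zero_iff.2 (hF i a))))
    exact ⟨z, hz⟩
  exact Classical.skolem.1 hlim

section Limits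

variable {ι : Type*} {l : Filter ι} [l.NeBot] {F : ι → A → ℂ} {ρ : A → ℂ}

theorem isLinearMap_of_tendsto (hF : ∀ i, IsLinearMap ℂ (F i))
    (h : ∀ a, Tendsto (fun i => F i a) l (𝓝 (ρ a))) : IsLinearMap ℂ ρ where
  map_add a b := tendsto_nhds_unique (h (a + b))
    (((h a).add (h b)).congr fun i => ((hF i).map_add a b).symm)
  map_smul z a := tendsto_nhds_unique (h (z • a))
    (((h a).const_smul z).congr fun i => ((hF i).map_smul z a).symm)

theorem isHermitian_of_tendsto (hF : ∀ i, IsHermitian (F i))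
    (h : ∀ a, Tendsto (fun i => F i a) l (𝓝 (ρ a))) : IsHermitian ρ := fun a =>
  tendsto_nhds_unique (h (star a)) ((h a).star.congr fun i => (hF i a).symm)

theorem dominated_of_tendsto {ω : A → ℂ} (hω : IsState ω) (hF : ∀ i, Dominated ω (F i))
    (h : ∀ a, Tendsto (fun i => F i a) l (𝓝 (ρ a))) : Dominated ω ρ :=
  hω.dominated_iff.2 fun a b => le_of_tendsto ((h (star a * b)).norm.pow 2)
    (Eventually.of_forall fun i => hω.dominated_iff.1 (hF i) a b)

end Limits

namespace IsAsymptoticImplementer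

variable {d : Dynamics A} {γ : A ≃⋆ₐ[ℂ] A} {V : ℕ → A} {β : ℝ} {ω : A → ℂ}

theorem isAnalyticExt (hV : IsAsymptoticImplementer d γ V) (n : ℕ) :
    d.IsAnalyticExt (V n) fun _ => V n :=
  ⟨differentiable_const _, fun t => (hV.invariant n t).symm⟩

theorem tendsto_map_mul_sub (hV : IsAsymptoticImplementer d γ V) {F : ℕ → A → ℂ}
    (hF : ∀ n a, ‖F n a‖ ≤ ‖a‖) (a b : A) :
    Tendsto (fun n => F n (b * (V n * a * V n - γ a))) atTop (𝓝 0) := by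
  have hconj : Tendsto (fun n => ‖b‖ * ‖V n * a * V n - γ a‖) atTop (𝓝 0) := by
    simpa using ((hV.tendsto a).sub_const (γ a)).norm.const_mul ‖b‖
  exact squeeze_zero_norm (fun n => (hF n _).trans (norm_mul_le _ _)) hconj

/-- With `V = V n`, the KMS condition for `a` and `b V` reads
`ω(a b(iβ) V) = ω(b V a) = ω(b (V a V) V)`, and `V a V → γ a`. -/
theorem isTwistedKMS_of_tendsto (hV : IsAsymptoticImplementer d γ V) (hω : d.IsKMS β ω)
    (hbound : ∀ n a, ‖ω (a * V n)‖ ≤ ‖a‖) {l : Filter ℕ} [l.NeBot] (hl : l ≤ atTop) {ρ : A → ℂ}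
    (hρ : ∀ a, Tendsto (fun n => ω (a * V n)) l (𝓝 (ρ a))) : d.IsTwistedKMS γ β ρ := by
  have hlin : ∀ n, IsLinearMap ℂ fun a => ω (a * V n) := fun n =>
    ⟨fun a b => by rw [add_mul, hω.1.1.map_add],
      fun z a => by rw [smul_mul_assoc, hω.1.1.map_smul]⟩
  refine ⟨isLinearMap_of_tendsto hlin hρ, fun a b fa fb ha hb => ?_⟩
  have hkms : ∀ n, ω (a * fb (Complex.I * β) * V n) =
      ω (b * γ a * V n) + ω (b * (V n * a * V n - γ a) * V n) := fun n => by
    rw [mul_assoc, hω.2 a (b * V n) fa _ ha (hb.mul (hV.isAnalyticExt n)), ← hω.1.1.map_add]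
    congr 1
    calc b * V n * a = b * V n * a * (V n * V n) := by rw [hV.mul_self, mul_one]
      _ = b * γ a * V n + b * (V n * a * V n - γ a) * V n := by noncomm_ring
  refine tendsto_nhds_unique (hρ _) ?_
  simpa only [hkms, add_zero] using
    (hρ (b * γ a)).add ((hV.tendsto_map_mul_sub hbound a b).mono_left hl)

theorem exists_twistedKMSDom (hV : IsAsymptoticImplementer d γ V) (hω : d.IsKMS β ω)
    (hcomm : ∀ n a, ω (a * V n) = ω (V n * a)) {c : ℝ}
    (hc : Tendsto (fun n => ‖ω (V n)‖) atTop (𝓝 c)) :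
    ∃ ρ, TwistedKMSDom d γ β ω ρ ∧ ‖ρ 1‖ = c := by
  have hherm : ∀ n, IsHermitian fun a => ω (a * V n) := fun n =>
    hω.1.isHermitian_mul_right (hV.star_eq n) (hcomm n)
  have hdom : ∀ n, Dominated ω fun a => ω (a * V n) := fun n =>
    hω.1.dominated_mul_right (hV.star_eq n) (hV.mul_self n) (hcomm n)
  have hbound : ∀ n a, ‖ω (a * V n)‖ ≤ ‖a‖ := fun n => (hdom n).norm_map_le hω.1
  obtain ⟨ρ, hρ⟩ := exists_tendsto_of_forall_norm_le (hyperfilter ℕ) hbound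
  have hl : (hyperfilter ℕ : Filter ℕ) ≤ atTop :=
    Nat.cofinite_eq_atTop ▸ hyperfilter_le_cofinite
  refine ⟨ρ, ⟨hV.isTwistedKMS_of_tendsto hω hbound hl hρ, isHermitian_of_tendsto hherm hρ,
    dominated_of_tendsto hω.1 hdom hρ⟩, ?_⟩
  exact tendsto_nhds_unique (by simpa only [one_mul] using (hρ 1).norm) (hc.mono_left hl)

end IsAsymptoticImplementer

/-! ### Infinite products -/

section InfiniteProducts

variable {ι : Type*} {f : ι → ℝ}

theorem multipliable_of_nonneg_of_le_one (h0 : ∀ i, 0 ≤ f i) (h1 : ∀ i, f i ≤ 1) :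
    Multipliable f := by
  refine ⟨⨅ s : Finset ι, ∏ i ∈ s, f i, ?_⟩
  rw [HasProd, SummationFilter.unconditional_filter]
  refine tendsto_atTop_ciInf (Finset.prod_anti_set_of_le_one h0 h1) ⟨0, ?_⟩
  rintro _ ⟨s, rfl⟩
  exact Finset.prod_nonneg fun i _ => h0 i

theorem tprod_le_prod_of_nonneg_of_le_one (h0 : ∀ i, 0 ≤ f i) (h1 : ∀ i, f i ≤ 1)
    (s : Finset ι) : ∏' i, f i ≤ ∏ i ∈ s, f i := by
  have hprod := (multipliable_of_nonneg_of_le_one h0 h1).hasProd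
  rw [HasProd, SummationFilter.unconditional_filter] at hprod
  exact (Finset.prod_anti_set_of_le_one h0 h1).le_of_tendsto hprod s

theorem tprod_pos_iff_summable_one_sub (h0 : ∀ i, 0 < f i) (h1 : ∀ i, f i ≤ 1) :
    0 < ∏' i, f i ↔ Summable fun i => 1 - f i := by
  constructor
  · intro hpos
    refine summable_of_sum_le (c := -Real.log (∏' i, f i)) (fun i => sub_nonneg.2 (h1 i))
      fun s => ?_
    have hle : ∏' i, f i ≤ Real.exp (-∑ i ∈ s, (1 - f i)) :=
      calc ∏' i, f i ≤ ∏ i ∈ s, f i :=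
            tprod_le_prod_of_nonneg_of_le_one (fun i => (h0 i).le) h1 s
        _ ≤ ∏ i ∈ s, Real.exp (-(1 - f i)) := Finset.prod_le_prod (fun i _ => (h0 i).le)
            fun i _ => by linarith [Real.add_one_le_exp (-(1 - f i))]
        _ = Real.exp (-∑ i ∈ s, (1 - f i)) := by rw [← Real.exp_sum, Finset.sum_neg_distrib]
    rw [le_neg]
    exact (Real.log_le_iff_le_exp hpos).2 hle
  · intro hsum
    have hne : ∏' i, (1 + (f i - 1)) ≠ 0 :=
      tprod_one_add_ne_zero_of_summable (fun i => by rw [add_sub_cancel]; exact (h0 i).ne')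
        (by simpa only [Real.norm_eq_abs, abs_sub_comm] using hsum.abs)
    simp only [add_sub_cancel] at hne
    exact hne.symm.lt_of_le (tprod_nonneg fun i => (h0 i).le)

theorem tanh_half_mul (x : ℝ) :
    Real.tanh (x / 2) * (1 + Real.exp x) = Real.exp x - 1 := by
  have hx : Real.exp x = Real.exp (x / 2) ^ 2 := by rw [← Real.exp_nat_mul]; congr 1; ring
  rw [Real.tanh_eq, Real.exp_neg, hx]
  field_simp
  ring

theorem abs_tanh_half (x : ℝ) :
    |Real.tanh (x / 2)| = (1 - Real.exp (-|x|)) / (1 + Real.exp (-|x|)) := by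
  have hquot : ∀ y, Real.tanh (y / 2) = (1 - Real.exp (-y)) / (1 + Real.exp (-y)) := fun y => by
    rw [eq_div_iff (by positivity), ← neg_neg (Real.tanh _), ← Real.tanh_neg, ← neg_div]
    linarith [tanh_half_mul (-y)]
  have habs : |Real.tanh (x / 2)| = |Real.tanh (|x| / 2)| := by
    rcases abs_choice x with hx | hx <;> simp only [hx, neg_div, Real.tanh_neg, abs_neg]
  have hle : Real.exp (-|x|) ≤ 1 := Real.exp_le_one_iff.2 (neg_nonpos.2 (abs_nonneg x))
  rw [habs, hquot, abs_of_nonneg]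
  exact div_nonneg (sub_nonneg.2 hle) (by positivity)

theorem tprod_abs_tanh_half_pos_iff {s : ι → ℝ} (hs : ∀ i, s i ≠ 0) :
    0 < ∏' i, |Real.tanh (s i / 2)| ↔ Summable fun i => Real.exp (-|s i|) := by
  have hpos : ∀ i, 0 < |Real.tanh (s i / 2)| := fun i =>
    abs_pos.2 ((Real.tanh_injective.ne_iff' Real.tanh_zero).2 (div_ne_zero (hs i) two_ne_zero))
  rw [tprod_pos_iff_summable_one_sub hpos fun i => (Real.abs_tanh_lt_one _).le]
  have hsub : ∀ i, 1 - |Real.tanh (s i / 2)| =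
      2 * Real.exp (-|s i|) / (1 + Real.exp (-|s i|)) := fun i => by
    rw [abs_tanh_half]
    field_simp
    ring
  have hexp_le : ∀ i, Real.exp (-|s i|) ≤ 1 := fun i =>
    Real.exp_le_one_iff.2 (neg_nonpos.2 (abs_nonneg _))
  constructor
  · refine fun h => h.of_nonneg_of_le (fun i => (Real.exp_pos _).le) fun i => ?_
    have hexp := Real.exp_pos (-|s i|)
    rw [hsub, le_div_iff₀ (by positivity)]
    nlinarith [hexp_le i]
  · refine fun h => (h.mul_left 2).of_nonneg_of_le
      (fun i => sub_nonneg.2 (Real.abs_tanh_lt_one _).le) fun i => ?_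
    have hexp := Real.exp_pos (-|s i|)
    rw [hsub]
    exact div_le_self (by positivity) (by linarith)

end InfiniteProducts

/-! ### Twisted functionals in the presence of an eigenbasis -/

theorem IsState.exists_continuousLinearMap {ω : A → ℂ} (h : IsState ω) :
    ∃ ω' : A →L[ℂ] ℂ, ⇑ω' = ω :=
  exists_continuousLinearMap_of_norm_le h.1 h.norm_map_le

theorem Dominated.exists_continuousLinearMap {ω ρ : A → ℂ} (hρ : Dominated ω ρ) (h : IsState ω)
    (hlin : IsLinearMap ℂ ρ) : ∃ ρ' : A →L[ℂ] ℂ, ⇑ρ' = ρ :=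
  exists_continuousLinearMap_of_norm_le hlin (hρ.norm_map_le h)

theorem IsState.isHermitian {ω : A → ℂ} (h : IsState ω) : IsHermitian ω := h.map_star

theorem Dynamics.IsKMS.isTwistedKMS {d : Dynamics A} {β : ℝ} {ω : A → ℂ} (h : d.IsKMS β ω) :
    d.IsTwistedKMS (.refl ℂ A) β ω :=
  ⟨h.1.1, h.2⟩

theorem TwistedKMSDom.const_mul {d : Dynamics A} {γ : A ≃⋆ₐ[ℂ] A} {β : ℝ} {ω ρ : A → ℂ}
    (hρ : TwistedKMSDom d γ β ω ρ) (hω : IsState ω) {c : ℝ} (hc : |c| ≤ 1) :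
    TwistedKMSDom d γ β ω fun a => c * ρ a := by
  obtain ⟨⟨hlin, hkms⟩, hherm, hdom⟩ := hρ
  refine ⟨⟨⟨fun a b => ?_, fun z a => ?_⟩, fun a b fa fb ha hb => ?_⟩, fun a => ?_, ?_⟩
  · rw [hlin.map_add, mul_add]
  · rw [hlin.map_smul, smul_eq_mul, smul_eq_mul, mul_left_comm]
  · simp only [hkms a b fa fb ha hb]
  · simp only [hherm a, map_mul, Complex.conj_ofReal]
  · refine hω.dominated_iff.2 fun a b => le_trans ?_ (hω.dominated_iff.1 hdom a b)
    rw [norm_mul, Complex.norm_real, Real.norm_eq_abs]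
    gcongr
    exact mul_le_of_le_one_left (norm_nonneg _) hc

namespace IsBogoliubovSystem

variable {H : Type*} [NormedAddCommGroup H] [InnerProductSpace ℂ H]
  {r : CARrep H A} {U : ℝ → H ≃ₗᵢ[ℂ] H} {d : Dynamics A} {G : H →L[ℂ] H} {γ : A ≃⋆ₐ[ℂ] A}
  {β : ℝ} {ω : A → ℂ} {e : ℕ → H} {lam : ℕ → ℝ}

theorem mul_eigenvalue_ne_zero (h : IsBogoliubovSystem r U d G γ) (hβ : β ≠ 0)
    (hE : EigenBasisOdd G U e lam) (k : ℕ) : β * lam k ≠ 0 := by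
  refine mul_ne_zero hβ fun hlam => hE.1.ne_zero k (h.eq_zero_of_invariant _ fun t => ?_)
  rw [hE.2.2.2, hlam]
  simp

theorem tanh_ne_zero (h : IsBogoliubovSystem r U d G γ) (hβ : β ≠ 0)
    (hE : EigenBasisOdd G U e lam) (k : ℕ) : Real.tanh (β * lam k / 2) ≠ 0 :=
  (Real.tanh_injective.ne_iff' Real.tanh_zero).2
    (div_ne_zero (h.mul_eigenvalue_ne_zero hβ hE k) two_ne_zero)

variable [CompleteSpace H]

theorem kms_map_reflectionProd (h : IsBogoliubovSystem r U d G γ) (hβ : β ≠ 0)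
    (hE : EigenBasisOdd G U e lam) (hω : d.IsKMS β ω) (n : ℕ) :
    ω (r.reflectionProd e n) = ((∏ k ∈ Finset.range n, Real.tanh (β * lam k / 2) : ℝ) : ℂ) := by
  obtain ⟨ω, rfl⟩ := hω.1.exists_continuousLinearMap
  obtain ⟨T, hT⟩ := h.ungraded.exists_isCovariance hω.isTwistedKMS hω.1.isHermitian
    (by simp [hω.1.2.2])
  have hTe : ∀ k, T (e k) = -(Complex.I * Real.tanh (β * lam k / 2)) • e k := fun k =>
    hT.apply_eigenvector (fun t => hE.2.2.2 t k) (g := 1) (by simp)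
      (by simpa using tanh_half_mul (β * lam k)) (by positivity)
  rw [h.ungraded.map_reflectionProd hβ hω.isTwistedKMS hT hE.1 hTe, hω.1.2.2, one_mul]

theorem twistedKMS_map_reflectionProd (h : IsBogoliubovSystem r U d G γ) (hβ : β ≠ 0)
    (hE : EigenBasisOdd G U e lam) {ρ : A →L[ℂ] ℂ} (hρ : d.IsTwistedKMS γ β ρ)
    {T : H →L[ℂ] H} (hT : IsCovariance U G β T) (n : ℕ) :
    ρ (r.reflectionProd e n) =
      ρ 1 * ((∏ k ∈ Finset.range n, (Real.tanh (β * lam k / 2))⁻¹ : ℝ) : ℂ) := by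
  have hTe : ∀ k, T (e k) = -(Complex.I * ((Real.tanh (β * lam k / 2))⁻¹ : ℝ)) • e k := fun k => by
    have htanh := h.tanh_ne_zero hβ hE k
    have hexp := tanh_half_mul (β * lam k)
    refine hT.apply_eigenvector (fun t => hE.2.2.2 t k) (g := -1) (by simp [hE.2.1]) ?_ ?_
    · rw [inv_mul_eq_iff_eq_mul₀ htanh]
      linarith
    · intro hzero
      exact h.mul_eigenvalue_ne_zero hβ hE k (Real.exp_eq_one_iff _ |>.1 (by linarith))
  exact h.map_reflectionProd hβ hρ hT hE.1 hTe n

theorem norm_map_one_le (h : IsBogoliubovSystem r U d G γ) (hβ : β ≠ 0)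
    (hE : EigenBasisOdd G U e lam) (hω : d.IsKMS β ω) {ρ : A →L[ℂ] ℂ}
    (hρ : TwistedKMSDom d γ β ω ρ) {T : H →L[ℂ] H} (hT : IsCovariance U G β T) :
    ‖ρ 1‖ ≤ ∏' k, |Real.tanh (β * lam k / 2)| := by
  have hprod := (multipliable_of_nonneg_of_le_one (fun k => abs_nonneg _)
    fun k => (Real.abs_tanh_lt_one (β * lam k / 2)).le).hasProd.tendsto_prod_nat
  refine ge_of_tendsto' hprod fun n => ?_
  have hle : ‖ρ (r.reflectionProd e n)‖ ^ 2 ≤ 1 := by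
    have hdom := hρ.2.2.norm_map_sq_le hω.1 (r.reflectionProd e n)
    rwa [r.star_reflectionProd hE.1, r.reflectionProd_mul_self hE.1, hω.1.2.2] at hdom
  rw [sq_le_one_iff₀ (norm_nonneg _), h.twistedKMS_map_reflectionProd hβ hE hρ.1 hT, norm_mul,
    Complex.norm_real, Finset.prod_inv_distrib, norm_inv, Real.norm_eq_abs, Finset.abs_prod,
    ← div_eq_mul_inv, div_le_one (Finset.prod_pos fun k _ => abs_pos.2 (h.tanh_ne_zero hβ hE k))]
    at hle
  exact hle

theorem exists_twistedKMSDom (h : IsBogoliubovSystem r U d G γ) (hβ : β ≠ 0)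
    (hE : EigenBasisOdd G U e lam) (hω : d.IsKMS β ω) :
    ∃ ρ, TwistedKMSDom d γ β ω ρ ∧ ‖ρ 1‖ = ∏' k, |Real.tanh (β * lam k / 2)| := by
  have hV := h.isAsymptoticImplementer_reflectionProd hE
  refine hV.exists_twistedKMSDom hω (fun n a => ?_) ?_
  · obtain ⟨ω, rfl⟩ := hω.1.exists_continuousLinearMap
    exact h.ungraded.map_mul_analytic hω.isTwistedKMS (hV.isAnalyticExt n) a
  · simpa only [h.kms_map_reflectionProd hβ hE hω, Complex.norm_real, Real.norm_eq_abs,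
      Finset.abs_prod] using (multipliable_of_nonneg_of_le_one (fun k => abs_nonneg _)
        fun k => (Real.abs_tanh_lt_one (β * lam k / 2)).le).hasProd.tendsto_prod_nat

theorem exists_isCovariance_of_tprod_pos (h : IsBogoliubovSystem r U d G γ) (hβ : β ≠ 0)
    (hE : EigenBasisOdd G U e lam) (hω : d.IsKMS β ω)
    (hpos : 0 < ∏' k, |Real.tanh (β * lam k / 2)|) :
    ∃ T : H →L[ℂ] H, IsCovariance U G β T := by
  obtain ⟨ρ, hρ, hone⟩ := h.exists_twistedKMSDom hβ hE hω
  obtain ⟨ρ, rfl⟩ := hρ.2.2.exists_continuousLinearMap hω.1 hρ.1.1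
  exact h.exists_isCovariance hρ.1 hρ.2.1 (norm_pos_iff.1 (hone ▸ hpos))

theorem twistedKMSDom_iff (h : IsBogoliubovSystem r U d G γ) (hβ : β ≠ 0)
    (hE : EigenBasisOdd G U e lam) (hω : d.IsKMS β ω)
    (hpos : 0 < ∏' k, |Real.tanh (β * lam k / 2)|) {T : H →L[ℂ] H} (hT : IsCovariance U G β T)
    (ρ : A → ℂ) :
    TwistedKMSDom d γ β ω ρ ↔ IsLinearMap ℂ ρ ∧ Continuous ρ ∧
      ∃ c : ℝ, |c| ≤ ∏' k, |Real.tanh (β * lam k / 2)| ∧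
        ∀ L : List H, ρ (r.fieldProd L) = c * qfVal T L := by
  have hreal : ∀ {σ : A → ℂ}, IsHermitian σ → ((σ 1).re : ℂ) = σ 1 := fun {σ} hσ =>
    Complex.conj_eq_iff_re.1 (by rw [← hσ, star_one])
  constructor
  · intro hρ
    obtain ⟨ρ, rfl⟩ := hρ.2.2.exists_continuousLinearMap hω.1 hρ.1.1
    exact ⟨hρ.1.1, ρ.continuous, (ρ 1).re,
      (Complex.abs_re_le_norm _).trans (h.norm_map_one_le hβ hE hω hρ hT),
      fun L => by rw [h.map_fieldProd hβ hρ.1 hT, hreal hρ.2.1]⟩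
  · rintro ⟨hlin, hcont, c, hc, hL⟩
    obtain ⟨ρ₀, hρ₀, hone⟩ := h.exists_twistedKMSDom hβ hE hω
    obtain ⟨ρ₀, rfl⟩ := hρ₀.2.2.exists_continuousLinearMap hω.1 hρ₀.1.1
    have hone_ne : ρ₀ 1 ≠ 0 := norm_pos_iff.1 (hone ▸ hpos)
    let ρ' : A →L[ℂ] ℂ := ⟨hlin.mk' ρ, hcont⟩
    have hext : ρ' = ((c / (ρ₀ 1).re : ℝ) : ℂ) • ρ₀ := r.functional_ext fun L => by
      rw [smul_apply, smul_eq_mul, h.map_fieldProd hβ hρ₀.1 hT, Complex.ofReal_div,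
        hreal hρ₀.2.1, ← mul_assoc, div_mul_cancel₀ _ hone_ne]
      exact hL L
    have hρ : ρ = fun a => ((c / (ρ₀ 1).re : ℝ) : ℂ) * ρ₀ a := congrArg DFunLike.coe hext
    rw [hρ]
    refine hρ₀.const_mul hω.1 ?_
    rw [← Real.norm_eq_abs, ← Complex.norm_real, Complex.ofReal_div, hreal hρ₀.2.1, norm_div, hone,
      Complex.norm_real]
    exact (div_le_one hpos).2 hc

end IsBogoliubovSystem

/-! ### Operators with square-bounded diagonal -/

section Compactness

variable {𝕜 E : Type*} [RCLike 𝕜] [NormedAddCommGroup E] [InnerProductSpace 𝕜 E]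

/-- The quadratic form of `X` has square sum at most `B` along every finite orthonormal family.
For symmetric `X` this is a form of the Hilbert–Schmidt condition that does not mention a basis. -/
def HasSquareBoundedDiagonal (X : E →L[𝕜] E) (B : ℝ) : Prop :=
  ∀ (n : ℕ) (f : Fin n → E), Orthonormal 𝕜 f → ∑ k, X.reApplyInnerSelf (f k) ^ 2 ≤ B

theorem isCompactOperator_starProjection (W : Submodule 𝕜 E) [FiniteDimensional 𝕜 W] :
    IsCompactOperator W.starProjection := by
  have := FiniteDimensional.proper 𝕜 W
  have h : IsCompactOperator W.orthogonalProjectionOnto :=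
    isCompactOperator_of_locallyCompactSpace_dom _
  exact h.clm_comp W.subtypeL

theorem norm_compression_le {X : E →L[𝕜] E} (hX : X.IsSymmetric) (K : Submodule 𝕜 E)
    [K.HasOrthogonalProjection] {δ : ℝ} (hδ : ∀ w ∈ K, |X.rayleighQuotient w| ≤ δ) :
    ‖K.starProjection * X * K.starProjection‖ ≤ δ := by
  set P := K.starProjection with hP
  have hsym : (P * X * P).IsSymmetric := fun x y => by
    have hXP : ⟪X (P x), P y⟫_𝕜 = ⟪P x, X (P y)⟫_𝕜 := hX _ _
    simp only [ContinuousLinearMap.coe_coe, mul_apply_eq_comp, hP,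
      K.inner_starProjection_left_eq_right] at hXP ⊢
    exact hXP
  rw [ContinuousLinearMap.norm_eq_iSup_rayleighQuotient _ hsym]
  refine ciSup_le fun x => le_trans ?_ (hδ (P x) (K.starProjection_apply_mem x))
  have hform : (P * X * P).reApplyInnerSelf x = X.reApplyInnerSelf (P x) := by
    simp only [ContinuousLinearMap.reApplyInnerSelf_apply, mul_apply_eq_comp, hP,
      K.inner_starProjection_left_eq_right]
  rcases eq_or_ne (P x) 0 with hx | hx
  · simp [hform, ContinuousLinearMap.reApplyInnerSelf_apply, hx]
  rw [ContinuousLinearMap.rayleighQuotient, hform, abs_div, abs_div, abs_sq, abs_sq]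
  gcongr
  exact K.norm_starProjection_apply_le x

namespace HasSquareBoundedDiagonal

variable {X : E →L[𝕜] E} {B : ℝ}

/-- A finite orthonormal family that nearly attains the supremum of the square sums leaves
little room for any unit vector orthogonal to it. -/
theorem exists_abs_rayleighQuotient_le (hB : HasSquareBoundedDiagonal X B) {δ : ℝ} (hδ : 0 < δ) :
    ∃ W : Submodule 𝕜 E, FiniteDimensional 𝕜 W ∧ ∀ w ∈ Wᗮ, |X.rayleighQuotient w| ≤ δ := by
  set S : Set ℝ := {s | ∃ (n : ℕ) (f : Fin n → E), Orthonormal 𝕜 f ∧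
    ∑ k, X.reApplyInnerSelf (f k) ^ 2 = s}
  have hne : S.Nonempty := ⟨_, 0, Fin.elim0, ⟨fun i => i.elim0, fun i => i.elim0⟩, rfl⟩
  have hbdd : BddAbove S := ⟨B, by rintro _ ⟨n, f, hf, rfl⟩; exact hB n f hf⟩
  obtain ⟨_, ⟨n, f, hf, rfl⟩, hlt⟩ :=
    exists_lt_of_lt_csSup hne (sub_lt_self (sSup S) (pow_pos hδ 2))
  have hunit : ∀ w ∈ (Submodule.span 𝕜 (Set.range f))ᗮ, ‖w‖ = 1 →
      |X.reApplyInnerSelf w| ≤ δ := by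
    intro w hw hw1
    have hon : Orthonormal 𝕜 (Matrix.vecCons w f) := orthonormal_vecCons_iff.2
      ⟨hw1, fun i => Submodule.inner_left_of_mem_orthogonal
        (Submodule.subset_span (Set.mem_range_self i)) hw, hf⟩
    have hle := le_csSup hbdd (show _ ∈ S from ⟨n + 1, _, hon, rfl⟩)
    simp only [Fin.sum_univ_succ, Matrix.cons_val_zero, Matrix.cons_val_succ] at hle
    exact abs_le_of_sq_le_sq (by linarith) hδ.le
  refine ⟨_, FiniteDimensional.span_of_finite 𝕜 (Set.finite_range f), fun w hw => ?_⟩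
  rcases eq_or_ne w 0 with rfl | hw0
  · simpa using hδ.le
  have hc : ((‖w‖⁻¹ : ℝ) : 𝕜) ≠ 0 := by simpa using hw0
  have hnorm : ‖((‖w‖⁻¹ : ℝ) : 𝕜) • w‖ = 1 := by
    rw [norm_smul, RCLike.norm_ofReal, abs_inv, abs_norm, inv_mul_cancel₀ (norm_ne_zero_iff.2 hw0)]
  rw [← X.rayleigh_smul w hc, ContinuousLinearMap.rayleighQuotient, hnorm, one_pow, div_one]
  exact hunit _ (Submodule.smul_mem _ _ hw) hnorm

theorem isCompactOperator [CompleteSpace E] (hB : HasSquareBoundedDiagonal X B)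
    (hX : X.IsSymmetric) : IsCompactOperator X := by
  refine (isClosed_setOfPred_isCompactOperator (σ₁₂ := RingHom.id 𝕜)).closure_subset
    (Metric.mem_closure_iff.2 fun ε hε => ?_)
  obtain ⟨W, _, hW⟩ := hB.exists_abs_rayleighQuotient_le (half_pos hε)
  set P := W.starProjection
  set Q := Wᗮ.starProjection
  have hP : IsCompactOperator P := isCompactOperator_starProjection W
  have hQ : Q = 1 - P := Submodule.starProjection_orthogonal W
  refine ⟨X - Q * X * Q, ?_, ?_⟩
  · have hsplit : X - Q * X * Q = P * X + (X * P - P * X * P) := by rw [hQ]; noncomm_ring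
    rw [hsplit]
    exact (hP.comp_clm X).add ((hP.clm_comp X).sub (hP.clm_comp (P * X)))
  · rw [dist_eq_norm, sub_sub_cancel]
    exact (norm_compression_le hX Wᗮ hW).trans_lt (half_lt_self hε)

theorem countable {ι : Type*} {v : ι → E} (hB : HasSquareBoundedDiagonal X B)
    (hv : Orthonormal 𝕜 v) (hne : ∀ i, X.reApplyInnerSelf (v i) ≠ 0) : Countable ι := by
  have hs : Summable fun i => X.reApplyInnerSelf (v i) ^ 2 := by
    refine summable_of_sum_le (c := B) (fun i => sq_nonneg _) fun s => ?_
    rw [← Finset.sum_coe_sort, ← Equiv.sum_comp s.equivFin.symm]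
    exact hB s.card (fun k => v (s.equivFin.symm k))
      (hv.comp _ (Subtype.val_injective.comp s.equivFin.symm.injective))
  have hsupp : (Function.support fun i => X.reApplyInnerSelf (v i) ^ 2) = Set.univ :=
    Function.support_eq_univ fun i => pow_ne_zero 2 (hne i)
  exact Set.countable_univ_iff.1 (hsupp ▸ hs.countable_support)

end HasSquareBoundedDiagonal

theorem exists_orthonormal_eigenvectors [CompleteSpace E] {X : E →L[𝕜] E}
    (hX : X.IsSymmetric) (hc : IsCompactOperator X) :
    ∃ s : Set E, Orthonormal 𝕜 ((↑) : s → E) ∧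
      (∀ v ∈ s, ∃ μ : ℝ, μ ≠ 0 ∧ X v = (μ : 𝕜) • v) ∧
      ∀ φ, (∀ v ∈ s, ⟪v, φ⟫_𝕜 = 0) → X φ = 0 := by
  let V : 𝕜 → Submodule 𝕜 E := Module.End.eigenspace (X : E →ₗ[𝕜] E)
  have (μ : {μ : 𝕜 // μ ≠ 0}) : FiniteDimensional 𝕜 (V μ) :=
    ContinuousLinearMap.finite_dimensional_eigenspace hc μ.1 μ.2
  let b (μ : {μ : 𝕜 // μ ≠ 0}) := stdOrthonormalBasis 𝕜 (V μ)
  let ι := Σ μ : {μ : 𝕜 // μ ≠ 0}, Fin (Module.finrank 𝕜 (V μ))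
  let v : ι → E := fun i => b i.1 i.2
  have hv : Orthonormal 𝕜 v :=
    (hX.orthogonalFamily_eigenspaces.comp Subtype.val_injective).orthonormal_sigma_orthonormal
      (v_family := fun μ i => b μ i) fun μ => (b μ).orthonormal
  have heig : ∀ i : ι, X (v i) = (i.1 : 𝕜) • v i := fun i =>
    Module.End.mem_eigenspace_iff.1 (b i.1 i.2).2
  have hreal : ∀ i : ι, ((RCLike.re (i.1 : 𝕜) : ℝ) : 𝕜) = i.1 := fun i =>
    RCLike.conj_eq_iff_re.1 (hX.conj_eigenvalue_eq_self
      (Module.End.hasEigenvalue_of_hasEigenvector ⟨(b i.1 i.2).2, hv.ne_zero i⟩))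
  refine ⟨Set.range v, hv.toSubtypeRange, ?_, fun φ hφ => ?_⟩
  · rintro _ ⟨i, rfl⟩
    refine ⟨RCLike.re (i.1 : 𝕜), fun h0 => i.1.2 ?_, by rw [hreal, heig]⟩
    rw [← hreal i, h0, RCLike.ofReal_zero]
  rw [← Submodule.mem_bot 𝕜,
    ← ContinuousLinearMap.orthogonalComplement_iSup_eigenspaces_eq_bot hc hX,
    ← Submodule.iInf_orthogonal, Submodule.mem_iInf]
  refine fun μ => (Submodule.mem_orthogonal _ _).2 fun y hy => ?_
  have hXy : X y = μ • y := Module.End.mem_eigenspace_iff.1 hy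
  refine (hX y φ).symm.trans ?_
  rw [ContinuousLinearMap.coe_coe, hXy, inner_smul_left]
  rcases eq_or_ne μ 0 with rfl | hμ
  · rw [map_zero, zero_mul]
  have hsum : ∑ k, (b ⟨μ, hμ⟩).repr ⟨y, hy⟩ k • v ⟨⟨μ, hμ⟩, k⟩ = y := by
    simpa [v, V] using congrArg Subtype.val ((b ⟨μ, hμ⟩).sum_repr ⟨y, hy⟩)
  rw [← hsum, sum_inner, Finset.sum_eq_zero, mul_zero]
  exact fun k _ => by rw [inner_smul_left, hφ _ ⟨⟨⟨μ, hμ⟩, k⟩, rfl⟩, mul_zero]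

end Compactness

/-! ### Correlation bounds for dominated functionals -/

/-- The Schur test for a symmetric nonnegative kernel. -/
theorem sum_sum_mul_le_of_rowSum_le {ι : Type*} [Fintype ι] {K : ι → ι → ℝ} {C : ℝ}
    (hsymm : ∀ i j, K i j = K j i) (hnonneg : ∀ i j, 0 ≤ K i j) (hrow : ∀ i, ∑ j, K i j ≤ C)
    (y : ι → ℝ) : ∑ i, ∑ j, y i * y j * K i j ≤ C * ∑ i, y i ^ 2 :=
  calc ∑ i, ∑ j, y i * y j * K i j
      ≤ ∑ i, ∑ j, (y i ^ 2 / 2 * K i j + y j ^ 2 / 2 * K j i) := by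
        gcongr with i _ j _
        rw [hsymm j i, ← add_mul]
        exact mul_le_mul_of_nonneg_right (by linarith [two_mul_le_add_sq (y i) (y j)])
          (hnonneg i j)
    _ = ∑ i, y i ^ 2 * ∑ j, K i j := by
        simp only [Finset.sum_add_distrib]
        rw [Finset.sum_comm (f := fun i j => y j ^ 2 / 2 * K j i), ← Finset.sum_add_distrib]
        simp only [← Finset.mul_sum, ← add_mul, add_halves]
    _ ≤ ∑ i, y i ^ 2 * C := by gcongr with i; exact hrow i
    _ = C * ∑ i, y i ^ 2 := by rw [← Finset.sum_mul, mul_comm]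

theorem Dominated.sum_norm_map_sq_le {ω ρ : A →L[ℂ] ℂ} (hρ : Dominated ω ρ) (hω : IsState ω)
    {ι : Type*} [Fintype ι] {q : ι → A} {C : ℝ} (hC : 0 ≤ C)
    (hrow : ∀ i, ∑ j, ‖ω (star (q i) * q j)‖ ≤ C) : ∑ i, ‖ρ (q i)‖ ^ 2 ≤ C := by
  set s := ∑ i, ‖ρ (q i)‖ ^ 2 with hs
  have hs_nonneg : 0 ≤ s := by positivity
  let Q : A := ∑ i, starRingEnd ℂ (ρ (q i)) • q i
  have hρQ : ρ Q = s := by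
    simp only [Q, map_sum, map_smul, smul_eq_mul, Complex.conj_mul', hs, Complex.ofReal_sum,
      Complex.ofReal_pow]
  have hsymm : ∀ i j, ‖ω (star (q i) * q j)‖ = ‖ω (star (q j) * q i)‖ := fun i j => by
    rw [← norm_star, ← hω.map_star, star_mul, star_star]
  have hωQ : ‖ω (star Q * Q)‖ ≤ C * s := by
    simp only [Q, star_sum, star_smul, Finset.sum_mul_sum, smul_mul_smul_comm, map_sum, map_smul,
      smul_eq_mul]
    refine le_trans ?_ (sum_sum_mul_le_of_rowSum_le hsymm (fun _ _ => norm_nonneg _) hrow _)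
    refine (norm_sum_le _ _).trans (Finset.sum_le_sum fun i _ => ?_)
    refine (norm_sum_le _ _).trans (Finset.sum_le_sum fun j _ => ?_)
    rw [norm_mul, norm_mul, norm_star, RCLike.norm_conj, RCLike.norm_conj]
  have hsq : s * s ≤ C * s := by
    have hdom := hρ.norm_map_sq_le hω Q
    rw [hρQ, Complex.norm_real, Real.norm_of_nonneg hs_nonneg, sq] at hdom
    exact hdom.trans ((Complex.re_le_norm _).trans hωQ)
  rcases hs_nonneg.eq_or_lt with hzero | hpos
  · rwa [← hzero]
  · exact le_of_mul_le_mul_right hsq hpos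

theorem IsState.map_star_centered_mul_centered {ω : A →L[ℂ] ℂ} (hω : IsState ω) (a b : A) :
    ω (star (a - ω a • 1) * (b - ω b • 1)) = ω (star a * b) - starRingEnd ℂ (ω a) * ω b := by
  simp only [star_sub, star_smul, star_one, sub_mul, mul_sub, smul_mul_assoc, mul_smul_comm,
    one_mul, mul_one, map_sub, map_smul, smul_eq_mul, hω.map_star, hω.2.2, RCLike.star_def]
  ring

section Covariance

variable {H : Type*} [NormedAddCommGroup H] [InnerProductSpace ℂ H]

theorem norm_twoPt_sq_add_twoPt_I_smul_sq_le (T : H →L[ℂ] H) (ξ η : H) :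
    ‖twoPt T ξ η ^ 2 + twoPt T ξ (Complex.I • η) ^ 2‖ ≤ ‖⟪ξ, η⟫_ℂ‖ ^ 2 + ‖⟪ξ, T η⟫_ℂ‖ ^ 2 := by
  have hsq : ∀ a b : ℝ, ‖(a : ℂ) + Complex.I * b‖ ^ 2 = a ^ 2 + b ^ 2 := fun a b => by
    rw [mul_comm, Complex.sq_norm, Complex.normSq_add_mul_I]
  have hnorm : ∀ z : ℂ, ‖z‖ ^ 2 = z.re ^ 2 + (Complex.I * z).re ^ 2 := fun z => by
    rw [Complex.sq_norm, Complex.normSq_apply, Complex.I_mul_re]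
    ring
  refine (norm_add_le _ _).trans_eq ?_
  rw [norm_pow, norm_pow, twoPt, twoPt, hsq, hsq, map_smul, inner_smul_right, inner_smul_right,
    hnorm, hnorm]
  ring

namespace IsCovariance

variable {U : ℝ → H ≃ₗᵢ[ℂ] H} {G : H →L[ℂ] H} {β : ℝ} {S T : H →L[ℂ] H}

theorem isSymmetric_I_smul_sub (hT : IsCovariance U G β T)
    (hS : IsCovariance U (.id ℂ H) β S) : (Complex.I • (T - S)).IsSymmetric := fun x y => by
  simp only [ContinuousLinearMap.coe_coe, smul_apply, sub_apply, inner_smul_left,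
    inner_smul_right, inner_sub_left, inner_sub_right, hT.inner_map_left, hS.inner_map_left,
    Complex.conj_I]
  ring

theorem reApplyInnerSelf_I_smul_sub (hT : IsCovariance U G β T)
    (hS : IsCovariance U (.id ℂ H) β S) (ξ : H) :
    (Complex.I • (T - S)).reApplyInnerSelf ξ = -(⟪ξ, T ξ⟫_ℂ).im - -(⟪ξ, S ξ⟫_ℂ).im := by
  rw [ContinuousLinearMap.reApplyInnerSelf_apply, ← ContinuousLinearMap.coe_coe,
    hT.isSymmetric_I_smul_sub hS ξ ξ]
  simp only [ContinuousLinearMap.coe_coe, smul_apply, sub_apply, inner_smul_right,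
    inner_sub_right, RCLike.re_to_complex, Complex.I_mul_re, Complex.sub_im]
  ring

theorem sum_norm_twoPt_sq_add_le (hS : IsCovariance U (.id ℂ H) β S) {ι : Type*} [Fintype ι]
    {f : ι → H} (hf : Orthonormal ℂ f) (j : ι) :
    ∑ k, ‖twoPt S (f j) (f k) ^ 2 + twoPt S (f j) (Complex.I • f k) ^ 2‖ ≤ 1 + ‖S‖ ^ 2 := by
  have hbessel : ∀ x, ∑ k, ‖⟪x, f k⟫_ℂ‖ ^ 2 ≤ ‖x‖ ^ 2 := fun x => by
    simpa only [norm_inner_symm x] using hf.sum_inner_products_le (s := Finset.univ) x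
  have hSf : ‖S (f j)‖ ≤ ‖S‖ := by simpa [hf.1 j] using S.le_opNorm (f j)
  calc _ ≤ ∑ k, (‖⟪f j, f k⟫_ℂ‖ ^ 2 + ‖⟪S (f j), f k⟫_ℂ‖ ^ 2) := by
        gcongr with k
        rw [hS.inner_map_left, norm_neg]
        exact norm_twoPt_sq_add_twoPt_I_smul_sq_le S (f j) (f k)
    _ ≤ ‖f j‖ ^ 2 + ‖S (f j)‖ ^ 2 := by
        rw [Finset.sum_add_distrib]
        exact add_le_add (hbessel _) (hbessel _)
    _ ≤ 1 + ‖S‖ ^ 2 := by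
        rw [hf.1 j, one_pow]
        gcongr

end IsCovariance

end Covariance

/-- Domination, applied to the centered parities of the modes `f k`, bounds the square sum of
`ρ (parity) - ω (parity) * ρ 1`, which is `ρ 1` times the diagonal of `i (T - S)`. -/
theorem IsBogoliubovSystem.hasSquareBoundedDiagonal {H : Type*} [NormedAddCommGroup H]
    [InnerProductSpace ℂ H] [CompleteSpace H] {r : CARrep H A} {U : ℝ → H ≃ₗᵢ[ℂ] H}
    {d : Dynamics A} {G : H →L[ℂ] H} {γ : A ≃⋆ₐ[ℂ] A} {β : ℝ}
    (h : IsBogoliubovSystem r U d G γ) (hβ : β ≠ 0) {ω ρ : A →L[ℂ] ℂ} (hω : d.IsKMS β ω)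
    (hρ : TwistedKMSDom d γ β ω ρ) (hone : ρ 1 ≠ 0) {S T : H →L[ℂ] H}
    (hT : IsCovariance U G β T) (hS : IsCovariance U (.id ℂ H) β S) :
    HasSquareBoundedDiagonal (Complex.I • (T - S)) ((1 + ‖S‖ ^ 2) / ‖ρ 1‖ ^ 2) := by
  intro n f hf
  have hωone : ω 1 = 1 := hω.1.2.2
  let q : Fin n → A := fun k => r.reflection (f k) - ω (r.reflection (f k)) • 1
  have hωf : ∀ k, ω (r.reflection (f k)) = ((-(⟪f k, S (f k)⟫_ℂ).im : ℝ) : ℂ) := fun k => by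
    rw [h.ungraded.map_reflection hβ hω.isTwistedKMS hS (hf.1 k), hωone, one_mul]
  have hcorr : ∀ j k, ω (star (q j) * q k) =
      twoPt S (f j) (f k) ^ 2 + twoPt S (f j) (Complex.I • f k) ^ 2 := fun j k => by
    rw [hω.1.map_star_centered_mul_centered, r.star_reflection,
      h.ungraded.map_reflection_mul_reflection hβ hω.isTwistedKMS hS (hf.1 j) (hf.1 k), hωone,
      hωf, hωf, Complex.conj_ofReal]
    ring
  have hρq : ∀ k, ρ (q k) = ρ 1 * ((Complex.I • (T - S)).reApplyInnerSelf (f k) : ℝ) := fun k => by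
    rw [map_sub, map_smul, h.map_reflection hβ hρ.1 hT (hf.1 k), hωf, smul_eq_mul,
      hT.reApplyInnerSelf_I_smul_sub hS, Complex.ofReal_sub]
    ring
  have hsum := hρ.2.2.sum_norm_map_sq_le hω.1 (q := q) (C := 1 + ‖S‖ ^ 2)
    (by positivity) fun j => by
    simpa only [hcorr] using hS.sum_norm_twoPt_sq_add_le hf j
  simp only [hρq, norm_mul, Complex.norm_real, mul_pow, Real.norm_eq_abs, sq_abs,
    ← Finset.mul_sum] at hsum
  rwa [le_div_iff₀' (by positivity)]

/-! ### Eigenbasis of the odd subspace -/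

theorem IsIsometryGroup.eq_zero_of_forall_inner_eq_zero {H : Type*} [NormedAddCommGroup H]
    [InnerProductSpace ℂ H] [CompleteSpace H] {U : ℝ → H ≃ₗᵢ[ℂ] H} (hU : IsIsometryGroup U)
    {w : H} (hw : ∀ ψ f, IsEntireOrbit U ψ f → ⟪w, ψ⟫_ℂ = 0) : w = 0 :=
  hU.dense_entireVectors.eq_zero_of_inner_left ℂ fun _ ⟨f, hf⟩ => hw _ f hf

namespace IsCovariance

variable {H : Type*} [NormedAddCommGroup H] [InnerProductSpace ℂ H]
  {U : ℝ → H ≃ₗᵢ[ℂ] H} {G : H →L[ℂ] H} {β : ℝ} {S T : H →L[ℂ] H}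

theorem map_map_sub (hT : IsCovariance U G β T) (hS : IsCovariance U (.id ℂ H) β S)
    (hGG : ∀ x, G (G x) = x) (hUG : ∀ t ξ, U t (G ξ) = G (U t ξ))
    (hdense : Dense (twistedRange U G β : Set H)) (x : H) :
    S (T (x - G x)) = -(x - G x) := by
  let M : H →L[ℂ] H := .id ℂ H - G
  have hUM : ∀ t ξ, U t (M ξ) = M (U t ξ) := fun t ξ => by simp [M, hUG]
  refine congrFun ((S.comp (T.comp M)).continuous.ext_on hdense (-M).continuous ?_) x
  rintro _ ⟨ψ, f, hf, rfl⟩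
  set η := f (-Complex.I * β)
  have hTM := hT.map_add _ _ (hf.map M hUM)
  have hSM : S (M ψ + M η) = Complex.I • (M ψ - M η) := hS.map_add _ _ (hf.map M hUM)
  have hGM : G (M η) = -M η := by simp [M, hGG]
  have hMG : M (G η) = -M η := by simp [M, hGG]
  rw [hGM, sub_neg_eq_add, ← hMG, ← _root_.map_add] at hTM
  simp only [ContinuousLinearMap.comp_apply, neg_apply]
  rw [hTM, map_smul, hSM, smul_smul, Complex.I_mul_I, neg_one_smul, _root_.map_add, hMG,
    sub_eq_add_neg]

theorem map_add_eq_map_add (hT : IsCovariance U G β T) (hS : IsCovariance U (.id ℂ H) β S)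
    (hGG : ∀ x, G (G x) = x) (hUG : ∀ t ξ, U t (G ξ) = G (U t ξ))
    (hdense : Dense (twistedRange U G β : Set H)) (x : H) :
    T (x + G x) = S (x + G x) := by
  let M : H →L[ℂ] H := .id ℂ H + G
  have hUM : ∀ t ξ, U t (M ξ) = M (U t ξ) := fun t ξ => by simp [M, hUG]
  refine congrFun ((T.comp M).continuous.ext_on hdense (S.comp M).continuous ?_) x
  rintro _ ⟨ψ, f, hf, rfl⟩
  set η := f (-Complex.I * β)
  have hTM := hT.map_add _ _ (hf.map M hUM)
  have hSM : S (M ψ + M η) = Complex.I • (M ψ - M η) := hS.map_add _ _ (hf.map M hUM)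
  have hGM : G (M η) = M η := by simp [M, hGG, add_comm]
  have hMG : M (G η) = M η := by simp [M, hGG, add_comm]
  rw [hGM] at hTM
  simp only [ContinuousLinearMap.comp_apply]
  rw [_root_.map_add M, hMG, hTM, hSM]

theorem inner_eq_of_eigenvector (hS : IsCovariance U (.id ℂ H) β S) {w : H} {δ : ℝ}
    (hw : S w = -(Complex.I * δ) • w) {ψ : H} {f : ℂ → H} (hf : IsEntireOrbit U ψ f) :
    (1 + δ : ℂ) * ⟪w, ψ⟫_ℂ = (1 - δ : ℂ) * ⟪w, f (-Complex.I * β)⟫_ℂ := by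
  have hmap : S (ψ + f (-Complex.I * β)) = Complex.I • (ψ - f (-Complex.I * β)) :=
    hS.map_add _ _ hf
  have hanti := hS.inner_map_left w (ψ + f (-Complex.I * β))
  rw [hw, inner_smul_left, hmap, inner_smul_right, inner_sub_right, inner_add_right] at hanti
  simp only [map_neg, map_mul, Complex.conj_I, Complex.conj_ofReal] at hanti
  refine mul_left_cancel₀ Complex.I_ne_zero ?_
  linear_combination hanti

variable [CompleteSpace H]

theorem eq_zero_of_eigenvector_of_abs_eq_one (hS : IsCovariance U (.id ℂ H) β S)
    (hU : IsIsometryGroup U) {w : H} {δ : ℝ} (hδ : |δ| = 1)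
    (hw : S w = -(Complex.I * δ) • w) : w = 0 := by
  refine hU.eq_zero_of_forall_inner_eq_zero fun ψ f hf => ?_
  rcases (abs_eq zero_le_one).1 hδ with rfl | rfl
  · simpa [add_eq_zero_iff_eq_neg] using hS.inner_eq_of_eigenvector hw hf
  · have hzero : f 0 = ψ := by simpa [hU.zero_apply] using hf.2 0
    simpa [hzero] using hS.inner_eq_of_eigenvector hw (hf.shift hU (Complex.I * β))

theorem exists_orbit_eq_exp_smul (hS : IsCovariance U (.id ℂ H) β S) (hU : IsIsometryGroup U)
    (hβ : β ≠ 0) {w : H} {δ : ℝ} (hδ : |δ| < 1) (hw : S w = -(Complex.I * δ) • w) :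
    ∃ lam : ℝ, ∀ t : ℝ, U t w = Complex.exp (Complex.I * t * lam) • w := by
  obtain ⟨hlower, hupper⟩ := abs_lt.1 hδ
  have hpos : 0 < (1 + δ) / (1 - δ) := div_pos (by linarith) (by linarith)
  have hne : (1 - δ : ℂ) ≠ 0 := by exact_mod_cast sub_ne_zero.2 hupper.ne'
  set lam := Real.log ((1 + δ) / (1 - δ)) / β with hlam
  have hexp : Complex.exp (lam * β) = (1 + δ) / (1 - δ) := by
    rw [← Complex.ofReal_mul, hlam, div_mul_cancel₀ _ hβ, ← Complex.ofReal_exp, Real.exp_log hpos]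
    push_cast
    rfl
  have horbit : ∀ ψ f, IsEntireOrbit U ψ f → ∀ t : ℝ,
      ⟪w, U t ψ⟫_ℂ = Complex.exp (Complex.I * t * lam) * ⟪w, ψ⟫_ℂ := fun ψ f hf =>
    hf.map_eq_exp_mul hU (innerSL ℂ w) hβ fun z => by
      have hrel := hS.inner_eq_of_eigenvector hw (hf.shift hU z)
      rw [innerSL_apply_apply, innerSL_apply_apply, hexp, div_mul_eq_mul_div, eq_div_iff hne, hrel,
        mul_comm, neg_mul, neg_add_eq_sub]
  refine ⟨lam, fun t => sub_eq_zero.1 (hU.eq_zero_of_forall_inner_eq_zero fun ψ f hf => ?_)⟩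
  have hadj : ⟪U t w, ψ⟫_ℂ = ⟪w, U (-t) ψ⟫_ℂ := by
    rw [← (U t).inner_map_map w, ← hU.add_apply, add_neg_cancel, hU.zero_apply]
  rw [inner_sub_left, hadj, horbit ψ f hf, inner_smul_left, ← Complex.exp_conj]
  simp

end IsCovariance

theorem exists_sq_add_mul_eq_one_and_one_le_abs_add (μ : ℝ) :
    ∃ a : ℝ, a ^ 2 + μ * a = 1 ∧ 1 ≤ |a + μ| := by
  have hsq := Real.sq_sqrt (show 0 ≤ μ ^ 2 + 4 by positivity)
  have htwo : 2 ≤ √(μ ^ 2 + 4) := Real.le_sqrt_of_sq_le (by linarith [sq_nonneg μ])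
  rcases le_total 0 μ with hμ | hμ
  · exact ⟨(-μ + √(μ ^ 2 + 4)) / 2, by linarith, le_abs.2 (.inl (by linarith))⟩
  · exact ⟨(-μ - √(μ ^ 2 + 4)) / 2, by linarith, le_abs.2 (.inr (by linarith))⟩

namespace IsBogoliubovSystem

variable {H : Type*} [NormedAddCommGroup H] [InnerProductSpace ℂ H] [CompleteSpace H]
  {r : CARrep H A} {U : ℝ → H ≃ₗᵢ[ℂ] H} {d : Dynamics A} {G : H →L[ℂ] H} {γ : A ≃⋆ₐ[ℂ] A}
  {β : ℝ} {ω : A →L[ℂ] ℂ} {S T : H →L[ℂ] H} {v w : H}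

theorem abs_lt_one_of_eigenvector (h : IsBogoliubovSystem r U d G γ) (hβ : β ≠ 0)
    (hω : d.IsKMS β ω) (hS : IsCovariance U (.id ℂ H) β S) (hw₀ : w ≠ 0) {δ : ℝ}
    (hw : S w = -(Complex.I * δ) • w) : |δ| < 1 := by
  refine lt_of_le_of_ne ?_ fun hδ =>
    hw₀ (hS.eq_zero_of_eigenvector_of_abs_eq_one h.isIsometryGroup hδ hw)
  set u := (‖w‖⁻¹ : ℂ) • w
  have hu : ‖u‖ = 1 := norm_smul_inv_norm hw₀
  have hinner : ⟪u, S u⟫_ℂ = -(Complex.I * δ) := by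
    rw [map_smul, hw, smul_comm, inner_smul_right, inner_self_eq_norm_sq_to_K, hu]
    simp
  have hle := hω.1.norm_map_sq_le (r.reflection u)
  rw [h.ungraded.map_reflection hβ hω.isTwistedKMS hS hu, r.star_reflection,
    r.reflection_mul_self hu, hω.1.2.2, hinner] at hle
  simpa using hle

theorem commute_I_smul_sub (h : IsBogoliubovSystem r U d G γ) (hβ : β ≠ 0)
    (hT : IsCovariance U G β T) (hS : IsCovariance U (.id ℂ H) β S) (x : H) :
    (Complex.I • (T - S)) (G x) = G ((Complex.I • (T - S)) x) := by
  simp only [smul_apply, sub_apply, map_smul, map_sub,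
    hT.commute (h.dense_twistedRange hβ) h.comm (fun _ => rfl),
    hS.commute (h.ungraded.dense_twistedRange hβ) h.comm (fun _ => rfl)]

theorem odd_of_eigenvector (h : IsBogoliubovSystem r U d G γ) (hβ : β ≠ 0)
    (hT : IsCovariance U G β T) (hS : IsCovariance U (.id ℂ H) β S) {μ : ℝ} (hμ : μ ≠ 0)
    (hv : (Complex.I • (T - S)) v = (μ : ℂ) • v) : G v = -v := by
  have heven : (Complex.I • (T - S)) (v + G v) = 0 := by
    rw [smul_apply, sub_apply, hT.map_add_eq_map_add hS h.map_map h.comm (h.dense_twistedRange hβ),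
      sub_self, smul_zero]
  rw [map_add, h.commute_I_smul_sub hβ hT hS, hv, map_smul, ← smul_add] at heven
  exact eq_neg_of_add_eq_zero_right
    ((smul_eq_zero.1 heven).resolve_left (Complex.ofReal_ne_zero.2 hμ))

/-- On odd vectors `S T = -1`, so an odd eigenvector of `i (T - S)` with eigenvalue `μ` satisfies
the quadratic equation `S² - iμ S + 1 = 0`, one root of which is excluded because every
eigenvalue of `i S` lies in `(-1, 1)`. -/
theorem exists_map_eq_smul_of_odd_eigenvector (h : IsBogoliubovSystem r U d G γ) (hβ : β ≠ 0)
    (hω : d.IsKMS β ω) (hT : IsCovariance U G β T) (hS : IsCovariance U (.id ℂ H) β S)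
    (hodd : G v = -v) {μ : ℝ} (hv : (Complex.I • (T - S)) v = (μ : ℂ) • v) :
    ∃ a : ℝ, a ^ 2 + μ * a = 1 ∧ S v = -(Complex.I * a) • v := by
  obtain ⟨a, hroot, hother⟩ := exists_sq_add_mul_eq_one_and_one_le_abs_add μ
  refine ⟨a, hroot, ?_⟩
  have hrootI : Complex.I * (a + μ) * (Complex.I * a) = -1 := by
    have hcast : (a : ℂ) ^ 2 + μ * a = 1 := by exact_mod_cast hroot
    linear_combination (a + μ) * a * Complex.I_sq - hcast
  have hTv : T v = S v - (Complex.I * μ) • v := by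
    rw [mul_smul, ← hv, smul_apply, smul_smul, Complex.I_mul_I, sub_apply]
    module
  have hST : S (T v) = -v := by
    have hmap := hT.map_map_sub hS h.map_map h.comm (h.dense_twistedRange hβ) v
    rw [hodd, sub_neg_eq_add, ← two_smul ℂ v, map_smul, map_smul, ← smul_neg] at hmap
    exact smul_right_injective H (two_ne_zero (α := ℂ)) hmap
  have hSS : S (S v) = (Complex.I * μ) • S v - v := by
    rw [hTv, map_sub, map_smul] at hST
    rw [sub_eq_iff_eq_add.1 hST]
    abel
  have hw : S (S v + (Complex.I * a) • v) =
      -(Complex.I * (-(a + μ) : ℝ)) • (S v + (Complex.I * a) • v) := by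
    rw [map_add, map_smul, hSS, Complex.ofReal_neg, mul_neg, neg_neg, Complex.ofReal_add,
      smul_add, smul_smul, hrootI]
    module
  have hzero : S v + (Complex.I * a) • v = 0 := by
    by_contra hne
    have hlt := h.abs_lt_one_of_eigenvector hβ hω hS hne hw
    rw [abs_neg] at hlt
    exact hother.not_gt hlt
  rw [eq_neg_of_add_eq_zero_left hzero, neg_smul]

theorem eq_zero_of_odd_of_map_eq_zero (h : IsBogoliubovSystem r U d G γ) (hβ : β ≠ 0)
    (hω : d.IsKMS β ω) (hT : IsCovariance U G β T) (hS : IsCovariance U (.id ℂ H) β S)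
    (hodd : G v = -v) (hv : (Complex.I • (T - S)) v = 0) : v = 0 := by
  obtain ⟨a, hroot, hSv⟩ := h.exists_map_eq_smul_of_odd_eigenvector hβ hω hT hS hodd (μ := 0)
    (by rw [hv, Complex.ofReal_zero, zero_smul])
  refine hS.eq_zero_of_eigenvector_of_abs_eq_one h.isIsometryGroup ?_ hSv
  rw [← sq_eq_sq₀ (abs_nonneg a) zero_le_one, sq_abs]
  linarith

theorem exists_orbit_eq_exp_smul (h : IsBogoliubovSystem r U d G γ) (hβ : β ≠ 0)
    (hω : d.IsKMS β ω) (hT : IsCovariance U G β T) (hS : IsCovariance U (.id ℂ H) β S)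
    {μ : ℝ} (hμ : μ ≠ 0) (hv₀ : v ≠ 0) (hv : (Complex.I • (T - S)) v = (μ : ℂ) • v) :
    ∃ lam : ℝ, ∀ t : ℝ, U t v = Complex.exp (Complex.I * t * lam) • v := by
  obtain ⟨a, -, hSv⟩ :=
    h.exists_map_eq_smul_of_odd_eigenvector hβ hω hT hS (h.odd_of_eigenvector hβ hT hS hμ hv) hv
  exact hS.exists_orbit_eq_exp_smul h.isIsometryGroup hβ
    (h.abs_lt_one_of_eigenvector hβ hω hS hv₀ hSv) hSv

end IsBogoliubovSystem

section HilbertSpace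

variable {𝕜 E : Type*} [RCLike 𝕜] [NormedAddCommGroup E] [InnerProductSpace 𝕜 E]

theorem le_topologicalClosure_span_of_forall_inner_eq_zero [CompleteSpace E] {K : Submodule 𝕜 E}
    (hK : IsClosed (K : Set E)) {s : Set E} (hs : s ⊆ K)
    (horth : ∀ φ ∈ K, (∀ v ∈ s, ⟪v, φ⟫_𝕜 = 0) → φ = 0) :
    K ≤ (Submodule.span 𝕜 s).topologicalClosure := by
  intro φ hφ
  set W := (Submodule.span 𝕜 s).topologicalClosure
  have hsW : s ⊆ W := Submodule.subset_span.trans (Submodule.le_topologicalClosure _)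
  have hWK : W ≤ K := Submodule.topologicalClosure_minimal _ (Submodule.span_le.2 hs) hK
  have : CompleteSpace W := (Submodule.isClosed_topologicalClosure _).completeSpace_coe
  have hproj := W.starProjection_apply_mem φ
  have hzero : φ - W.starProjection φ = 0 := horth _ (K.sub_mem hφ (hWK hproj)) fun v hv =>
    (Submodule.mem_orthogonal _ _).1 (W.sub_starProjection_mem_orthogonal φ) v (hsW hv)
  rwa [sub_eq_zero.1 hzero]

theorem infinite_of_le_topologicalClosure_span {K : Submodule 𝕜 E} (hK : ¬ FiniteDimensional 𝕜 K)
    {s : Set E} (hs : K ≤ (Submodule.span 𝕜 s).topologicalClosure) : s.Infinite := by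
  refine fun hfin => hK ?_
  have := FiniteDimensional.span_of_finite 𝕜 hfin
  rw [(Submodule.closed_of_finiteDimensional _).submodule_topologicalClosure_eq] at hs
  exact Submodule.finiteDimensional_of_le hs

end HilbertSpace

section EigenBasis

variable {H : Type*} [NormedAddCommGroup H] [InnerProductSpace ℂ H] [CompleteSpace H]
  {U : ℝ → H ≃ₗᵢ[ℂ] H} {G : H →L[ℂ] H}

theorem exists_eigenBasisOdd
    (hinf : ¬ FiniteDimensional ℂ (LinearMap.ker ((G + 1 : H →L[ℂ] H) : H →ₗ[ℂ] H)))
    {s : Set H} [Countable s] (hs : Orthonormal ℂ ((↑) : s → H)) (hodd : ∀ v ∈ s, G v = -v)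
    (horth : ∀ φ, G φ = -φ → (∀ v ∈ s, ⟪v, φ⟫_ℂ = 0) → φ = 0)
    (heig : ∀ v ∈ s, ∃ lam : ℝ, ∀ t : ℝ, U t v = Complex.exp (Complex.I * t * lam) • v) :
    ∃ (e : ℕ → H) (lam : ℕ → ℝ), EigenBasisOdd G U e lam := by
  set K := LinearMap.ker ((G + 1 : H →L[ℂ] H) : H →ₗ[ℂ] H)
  have hmem : ∀ φ, φ ∈ K ↔ G φ = -φ := fun φ => add_eq_zero_iff_eq_neg
  have hle : K ≤ (Submodule.span ℂ s).topologicalClosure :=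
    le_topologicalClosure_span_of_forall_inner_eq_zero (ContinuousLinearMap.isClosed_ker (G + 1))
      (fun v hv => (hmem v).2 (hodd v hv)) fun φ hφ => horth φ ((hmem φ).1 hφ)
  have : Infinite s := (infinite_of_le_topologicalClosure_span hinf hle).to_subtype
  obtain ⟨hden⟩ := nonempty_denumerable s
  let b : ℕ ≃ s := (Denumerable.eqv s).symm
  have hrange : Set.range (fun k => (b k : H)) = s := by
    rw [show (fun k => (b k : H)) = (↑) ∘ b from rfl, b.surjective.range_comp, Subtype.range_coe]
  choose lam hlam using fun k => heig (b k) (b k).2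
  refine ⟨fun k => b k, lam, hs.comp b b.injective, fun k => hodd _ (b k).2, fun φ hφ => ?_,
    fun t k => hlam k t⟩
  rw [hrange, ← Submodule.topologicalClosure_coe]
  exact hle ((hmem φ).2 hφ)

theorem IsBogoliubovSystem.exists_eigenBasisOdd_of_twistedKMSDom {r : CARrep H A}
    {d : Dynamics A} {γ : A ≃⋆ₐ[ℂ] A} (h : IsBogoliubovSystem r U d G γ) {β : ℝ} (hβ : β ≠ 0)
    {ω ρ : A → ℂ} (hω : d.IsKMS β ω)
    (hinf : ¬ FiniteDimensional ℂ (LinearMap.ker ((G + 1 : H →L[ℂ] H) : H →ₗ[ℂ] H)))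
    (hρ : TwistedKMSDom d γ β ω ρ) (hρ₀ : ρ ≠ 0) :
    ∃ (e : ℕ → H) (lam : ℕ → ℝ), EigenBasisOdd G U e lam ∧
      0 < ∏' k, |Real.tanh (β * lam k / 2)| := by
  obtain ⟨ω, rfl⟩ := hω.1.exists_continuousLinearMap
  obtain ⟨ρ, rfl⟩ := hρ.2.2.exists_continuousLinearMap hω.1 hρ.1.1
  have hone : ρ 1 ≠ 0 := fun hzero => hρ₀ <| by
    rw [h.eq_of_map_one_eq hβ hρ.1 (σ := 0) ⟨LinearMap.isLinear 0, by simp⟩ (by simpa)]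
    rfl
  obtain ⟨T, hT⟩ := h.exists_isCovariance hρ.1 hρ.2.1 hone
  obtain ⟨S, hS⟩ := h.ungraded.exists_isCovariance hω.isTwistedKMS hω.1.isHermitian
    (by simp [hω.1.2.2])
  have hB := h.hasSquareBoundedDiagonal hβ hω hρ hone hT hS
  have hsymm := hT.isSymmetric_I_smul_sub hS
  obtain ⟨s, hs, heig, hker⟩ := exists_orthonormal_eigenvectors hsymm (hB.isCompactOperator hsymm)
  have : Countable s := hB.countable hs fun v => by
    obtain ⟨μ, hμ, hv⟩ := heig v v.2
    rw [ContinuousLinearMap.reApplyInnerSelf_apply, hv, inner_smul_left,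
      inner_self_eq_norm_sq_to_K, hs.1 v]
    simpa
  obtain ⟨e, lam, hE⟩ := exists_eigenBasisOdd hinf hs
    (fun v hv => by
      obtain ⟨μ, hμ, hXv⟩ := heig v hv
      exact h.odd_of_eigenvector hβ hT hS hμ hXv)
    (fun φ hφ horth => h.eq_zero_of_odd_of_map_eq_zero hβ hω hT hS hφ (hker φ horth))
    (fun v hv => by
      obtain ⟨μ, hμ, hXv⟩ := heig v hv
      exact h.exists_orbit_eq_exp_smul hβ hω hT hS hμ (hs.ne_zero ⟨v, hv⟩) hXv)
  exact ⟨e, lam, hE, (norm_pos_iff.2 hone).trans_le (h.norm_map_one_le hβ hE hω hρ hT)⟩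

end EigenBasis

/-- For the graded CAR system `(CAR(H), α^{H₀}, γ_G)` with
`dim H_odd = ∞`, `ker H₀ = {0}` and the unique `(α^{H₀}, β)`-KMS state `ω_β` (`β ≠ 0`),
the following are equivalent:
(a) there is a nonzero hermitian `γ_G`-twisted `(α^{H₀}, β)`-KMS functional dominated
    by `ω_β`;
(b) `H_odd` has an orthonormal eigenbasis for `H₀` with eigenvalues `lam` and
    `c_{βH₀} = ∏ₖ (1 − e^{−|β lam k|})/(1 + e^{−|β lam k|}) > 0`;
(c) `H_odd` has an orthonormal eigenbasis for `H₀` with eigenvalues `lam` and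
    `Tr(e^{−|β H_odd|}) = Σₖ e^{−|β lam k|} < ∞`.
In this case `μ_{T_β^G}` is bounded — there is a bounded operator `T = T_β^G` with
`T(1 + Ge^{βH₀}) = i(1 − Ge^{βH₀})` on analytic vectors — and the set of hermitian
`γ_G`-twisted KMS functionals dominated by `ω_β` is exactly
`{c · μ_{T_β^G} : c ∈ [−c_{βH₀}, c_{βH₀}]}`. -/
theorem car_twisted_kms_functionals_classification
    {Hs A : Type*} [NormedAddCommGroup Hs] [InnerProductSpace ℂ Hs] [CompleteSpace Hs]
    [CStarAlgebra A] (r : CARrep Hs A)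
    (U : ℝ → Hs ≃ₗᵢ[ℂ] Hs)
    (hU0 : ∀ ξ, U 0 ξ = ξ) (hUadd : ∀ s t ξ, U (s + t) ξ = U s (U t ξ))
    (hUcont : ∀ ξ, Continuous fun t : ℝ => U t ξ)
    (G : Hs →L[ℂ] Hs) (hG_sa : star G = G) (hG_un : ∀ φ, G (G φ) = φ)
    (hUG : ∀ (t : ℝ) (ξ), U t (G ξ) = G (U t ξ))
    (hodd_inf : ¬ FiniteDimensional ℂ (LinearMap.ker ((G + 1 : Hs →L[ℂ] Hs) : Hs →ₗ[ℂ] Hs)))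
    (hker : ∀ φ : Hs, (∀ t : ℝ, U t φ = φ) → φ = 0)
    (d : Dynamics A) (hd : ∀ (t : ℝ) (φ), d.α t (r.c φ) = r.c (U t φ))
    (γ : A ≃⋆ₐ[ℂ] A) (hγ : ∀ φ, γ (r.c φ) = r.c (G φ))
    (β : ℝ) (hβ : β ≠ 0)
    (ω : A → ℂ) (hω : d.IsKMS β ω) (hω_unique : ∀ ω' : A → ℂ, d.IsKMS β ω' → ω' = ω) :
    ((∃ ρ : A → ℂ, ρ ≠ 0 ∧ TwistedKMSDom d γ β ω ρ) ↔
      ∃ (e : ℕ → Hs) (lam : ℕ → ℝ), EigenBasisOdd G U e lam ∧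
        0 < ∏' k, (1 - Real.exp (-|β * lam k|)) / (1 + Real.exp (-|β * lam k|))) ∧
    ((∃ (e : ℕ → Hs) (lam : ℕ → ℝ), EigenBasisOdd G U e lam ∧
        0 < ∏' k, (1 - Real.exp (-|β * lam k|)) / (1 + Real.exp (-|β * lam k|))) ↔
      ∃ (e : ℕ → Hs) (lam : ℕ → ℝ), EigenBasisOdd G U e lam ∧
        Summable fun k => Real.exp (-|β * lam k|)) ∧
    ∀ (e : ℕ → Hs) (lam : ℕ → ℝ), EigenBasisOdd G U e lam →
      (Summable fun k => Real.exp (-|β * lam k|)) →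
      ∃ T : Hs →L[ℂ] Hs,
        (∀ (φ : Hs) (f : ℂ → Hs), Differentiable ℂ f → (∀ t : ℝ, f (t : ℂ) = U t φ) →
          T (φ + G (f (-(Complex.I) * β))) =
            Complex.I • (φ - G (f (-(Complex.I) * β)))) ∧
        {ρ : A → ℂ | TwistedKMSDom d γ β ω ρ} =
          {ρ : A → ℂ | IsLinearMap ℂ ρ ∧ Continuous ρ ∧
            ∃ c : ℝ,
              |c| ≤ ∏' k, (1 - Real.exp (-|β * lam k|)) / (1 + Real.exp (-|β * lam k|)) ∧
              ∀ L : List Hs, ρ (r.fieldProd L) = c * qfVal T L} := by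
  have hG : ContinuousLinearMap.adjoint G = G := hG_sa
  have h : IsBogoliubovSystem r U d G γ :=
    ⟨⟨hU0, hUadd, hUcont⟩, fun x y => by
      simpa only [hG] using ContinuousLinearMap.adjoint_inner_left G y x, hG_un, hUG, hker, hd, hγ⟩
  have hpos_iff : ∀ {e : ℕ → Hs} {lam : ℕ → ℝ}, EigenBasisOdd G U e lam →
      (0 < ∏' k, |Real.tanh (β * lam k / 2)| ↔ Summable fun k => Real.exp (-|β * lam k|)) :=
    fun hE => tprod_abs_tanh_half_pos_iff (h.mul_eigenvalue_ne_zero hβ hE)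
  simp only [← abs_tanh_half]
  refine ⟨⟨?_, ?_⟩, exists₂_congr fun e lam => and_congr_right hpos_iff, fun e lam hE hsum => ?_⟩
  · rintro ⟨ρ, hρ₀, hρ⟩
    exact h.exists_eigenBasisOdd_of_twistedKMSDom hβ hω hodd_inf hρ hρ₀
  · rintro ⟨e, lam, hE, hpos⟩
    obtain ⟨ρ, hρ, hone⟩ := h.exists_twistedKMSDom hβ hE hω
    exact ⟨ρ, by rintro rfl; simp [← hone] at hpos, hρ⟩
  · have hpos := (hpos_iff hE).2 hsum
    obtain ⟨T, hT⟩ := h.exists_isCovariance_of_tprod_pos hβ hE hω hpos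
    exact ⟨T, fun φ f hf hf' => hT.map_add φ f ⟨hf, hf'⟩,
      Set.ext (h.twistedKMSDom_iff hβ hE hω hpos hT)⟩

end
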